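/- arXiv:1106.4075 — 5 statements merged into one kernel-verified Lean document; each statement's English description precedes it below -/
import Mathlib

section
/- Let μ, ν be finite positive Borel measures on [0,∞) and, for each dimension d ∈ ℕ, define the radial kernels K_d(x,y) = ∫₀^∞ e^{−t‖x−y‖²} dμ(t) and G_d(x,y) = ∫₀^∞ e^{−t‖x−y‖²} dν(t) for x, y ∈ ℝ^d, where ‖·‖ is the Euclidean norm. Then the following are equivalent: (a) there exists λ ≥ 0 such that for every d ∈ ℕ the function λG_d − K_d is a positive semidefinite kernel on ℝ^d; (b) μ is absolutely continuous with respect to ν and dμ/dν is ν-essentially bounded. Moreover, in that case sup over d ∈ ℕ of the infimum λ(K_d,G_d) of admissible constants equals ‖dμ/dν‖_{L^∞_ν([0,∞))}. -/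
open MeasureTheory
open scoped ComplexOrder NNReal

/-- A function `K : X × X → ℂ` is a positive semidefinite kernel if every finite
quadratic form `∑ j, ∑ k, c j * conj (c k) * K (x j) (x k)` is a nonnegative real number. -/
def IsPSDKernel {X : Type*} (K : X → X → ℂ) : Prop :=
  ∀ (n : ℕ) (x : Fin n → X) (c : Fin n → ℂ),
    0 ≤ ∑ j, ∑ k, c j * (starRingEnd ℂ) (c k) * K (x j) (x k)

lemma exp_integrable (μ : Measure ℝ≥0) [IsFiniteMeasure μ] (r : ℝ) (hr : 0 ≤ r) :
    Integrable (fun t : ℝ≥0 => Real.exp (-(t : ℝ) * r)) μ := by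
  refine Integrable.of_bound (C := 1) (by fun_prop) (ae_of_all _ fun t => ?_)
  rw [Real.norm_eq_abs, Real.abs_exp, Real.exp_le_one_iff]
  have := mul_nonneg t.2 hr
  simp only [neg_mul]
  linarith [show (t:ℝ) * r = t.1 * r from rfl]

lemma form_eq {E : Type*} [NormedAddCommGroup E] (μ : Measure ℝ≥0) [IsFiniteMeasure μ]
    (n : ℕ) (x : Fin n → E) (c : Fin n → ℂ) (Q : ℝ≥0 → ℝ)
    (hQ : ∀ t : ℝ≥0, (Q t : ℂ) = ∑ j, ∑ k, c j * (starRingEnd ℂ) (c k) *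
      ((Real.exp (-(t : ℝ) * ‖x j - x k‖ ^ 2) : ℝ) : ℂ)) :
    ∑ j, ∑ k, c j * (starRingEnd ℂ) (c k) *
      ((∫ t, Real.exp (-(t : ℝ) * ‖x j - x k‖ ^ 2) ∂μ : ℝ) : ℂ) = ((∫ t, Q t ∂μ : ℝ) : ℂ) := by
  rw [← integral_complex_ofReal]
  simp_rw [hQ]
  have hi : ∀ j k, Integrable (fun t : ℝ≥0 => c j * (starRingEnd ℂ) (c k) *
      ((Real.exp (-(t : ℝ) * ‖x j - x k‖ ^ 2) : ℝ) : ℂ)) μ := fun j k =>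
    ((exp_integrable μ _ (by positivity)).ofReal).const_mul _
  rw [integral_finsetSum _ (fun j _ => integrable_finsetSum _ (fun k _ => hi j k))]
  refine Finset.sum_congr rfl fun j _ => ?_
  rw [integral_finsetSum _ (fun k _ => hi j k)]
  refine Finset.sum_congr rfl fun k _ => ?_
  rw [integral_const_mul, integral_complex_ofReal]

lemma gauss_psd {d : ℕ} (n : ℕ) (x : Fin n → EuclideanSpace ℝ (Fin d)) (c : Fin n → ℂ)
    (t : ℝ≥0) : 0 ≤ ∑ j, ∑ k, c j * (starRingEnd ℂ) (c k) *
      ((Real.exp (-(t : ℝ) * ‖x j - x k‖ ^ 2) : ℝ) : ℂ) := by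
  set s : ℝ := Real.sqrt (2 * t) with hs
  have hs2 : s ^ 2 = 2 * t := Real.sq_sqrt (by positivity)
  set γ := ProbabilityTheory.stdGaussian (EuclideanSpace ℝ (Fin d)) with hγ
  let e : Fin n → EuclideanSpace ℝ (Fin d) → ℂ := fun j w =>
    Complex.exp ((inner ℝ w (s • x j) : ℝ) * Complex.I)
  have hec : ∀ j, Continuous (e j) := fun j => by fun_prop
  have hen : ∀ j w, ‖e j w‖ = 1 := fun j w => Complex.norm_exp_ofReal_mul_I _
  have h1 : ∀ j k, ((Real.exp (-(t : ℝ) * ‖x j - x k‖ ^ 2) : ℝ) : ℂ)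
      = ∫ w, e j w * (starRingEnd ℂ) (e k w) ∂γ := by
    intro j k
    have h := ProbabilityTheory.charFun_stdGaussian (s • (x j - x k))
    rw [charFun_apply] at h
    have : ∀ w, e j w * (starRingEnd ℂ) (e k w)
        = Complex.exp ((inner ℝ w (s • (x j - x k)) : ℝ) * Complex.I) := by
      intro w
      simp only [e, ← Complex.exp_conj, ← Complex.exp_add, smul_sub, inner_sub_right]
      congr 1
      simp
      ring
    simp_rw [this]
    rw [h, norm_smul]
    push_cast
    congr 1
    rw [mul_pow, ← Complex.ofReal_pow, ← Complex.ofReal_pow ‖s‖, Real.norm_eq_abs, sq_abs, hs2]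
    push_cast
    ring
  have hi : ∀ j k, Integrable (fun w => c j * (starRingEnd ℂ) (c k) *
      (e j w * (starRingEnd ℂ) (e k w))) γ := fun j k => by
    refine Integrable.const_mul ?_ _
    refine Integrable.of_bound (C := 1) ?_ (ae_of_all _ fun w => ?_)
    · exact ((hec j).mul (Complex.continuous_conj.comp (hec k))).aestronglyMeasurable
    · simp [hen]
  have h2 : ∑ j, ∑ k, c j * (starRingEnd ℂ) (c k) *
      ((Real.exp (-(t : ℝ) * ‖x j - x k‖ ^ 2) : ℝ) : ℂ)
      = ∫ w, ((Complex.normSq (∑ j, c j * e j w) : ℝ) : ℂ) ∂γ := by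
    have : ∀ w, ((Complex.normSq (∑ j, c j * e j w) : ℝ) : ℂ) =
        ∑ j, ∑ k, c j * (starRingEnd ℂ) (c k) * (e j w * (starRingEnd ℂ) (e k w)) := by
      intro w
      rw [← Complex.mul_conj, map_sum, Finset.sum_mul_sum]
      refine Finset.sum_congr rfl fun j _ => Finset.sum_congr rfl fun k _ => ?_
      rw [map_mul]; ring
    simp_rw [this]
    rw [integral_finsetSum _ (fun j _ => integrable_finsetSum _ (fun k _ => hi j k))]
    refine Finset.sum_congr rfl fun j _ => ?_
    rw [integral_finsetSum _ (fun k _ => hi j k)]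
    refine Finset.sum_congr rfl fun k _ => ?_
    rw [integral_const_mul, h1]
  rw [h2, integral_complex_ofReal]
  exact_mod_cast integral_nonneg fun w => Complex.normSq_nonneg _

lemma ker_form {d : ℕ} (μ ν : Measure ℝ≥0) [IsFiniteMeasure μ] [IsFiniteMeasure ν] (lam : ℝ)
    (K G : EuclideanSpace ℝ (Fin d) → EuclideanSpace ℝ (Fin d) → ℂ)
    (hK : ∀ (x y : EuclideanSpace ℝ (Fin d)),
      K x y = ((∫ t, Real.exp (-(t : ℝ) * ‖x - y‖ ^ 2) ∂μ : ℝ) : ℂ))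
    (hG : ∀ (x y : EuclideanSpace ℝ (Fin d)),
      G x y = ((∫ t, Real.exp (-(t : ℝ) * ‖x - y‖ ^ 2) ∂ν : ℝ) : ℂ))
    (n : ℕ) (x : Fin n → EuclideanSpace ℝ (Fin d)) (c : Fin n → ℂ) (Q : ℝ≥0 → ℝ)
    (hQ : ∀ t : ℝ≥0, (Q t : ℂ) = ∑ j, ∑ k, c j * (starRingEnd ℂ) (c k) *
      ((Real.exp (-(t : ℝ) * ‖x j - x k‖ ^ 2) : ℝ) : ℂ)) :
    ∑ j, ∑ k, c j * (starRingEnd ℂ) (c k) * ((lam : ℂ) * G (x j) (x k) - K (x j) (x k))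
      = ((lam * ∫ t, Q t ∂ν - ∫ t, Q t ∂μ : ℝ) : ℂ) := by
  push_cast
  rw [← form_eq μ n x c Q hQ, ← form_eq ν n x c Q hQ, Finset.mul_sum, ← Finset.sum_sub_distrib]
  refine Finset.sum_congr rfl fun j _ => ?_
  rw [Finset.mul_sum, ← Finset.sum_sub_distrib]
  refine Finset.sum_congr rfl fun k _ => ?_
  rw [hK, hG]; ring

lemma exists_Q {d : ℕ} (n : ℕ) (x : Fin n → EuclideanSpace ℝ (Fin d)) (c : Fin n → ℂ) :
    ∃ Q : ℝ≥0 → ℝ, (∀ t, 0 ≤ Q t) ∧ (∀ t : ℝ≥0, (Q t : ℂ) = ∑ j, ∑ k,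
      c j * (starRingEnd ℂ) (c k) * ((Real.exp (-(t : ℝ) * ‖x j - x k‖ ^ 2) : ℝ) : ℂ)) ∧
      ∀ (μ : Measure ℝ≥0) [IsFiniteMeasure μ], Integrable Q μ := by
  refine ⟨fun t => (∑ j, ∑ k, c j * (starRingEnd ℂ) (c k) *
      ((Real.exp (-(t : ℝ) * ‖x j - x k‖ ^ 2) : ℝ) : ℂ)).re, fun t => ?_, fun t => ?_, ?_⟩
  · exact (Complex.le_def.1 (gauss_psd n x c t)).1
  · exact (Complex.eq_re_of_ofReal_le (r := 0) (by simpa using gauss_psd n x c t)).symm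
  · intro μ _
    refine Integrable.re (𝕜 := ℂ) ?_
    exact integrable_finsetSum _ fun j _ => integrable_finsetSum _ fun k _ =>
      ((exp_integrable μ _ (by positivity)).ofReal).const_mul _

lemma psd_of_le {d : ℕ} (μ ν : Measure ℝ≥0) [IsFiniteMeasure μ] [IsFiniteMeasure ν] (lam : ℝ)
    (hlam : 0 ≤ lam)
    (K G : EuclideanSpace ℝ (Fin d) → EuclideanSpace ℝ (Fin d) → ℂ)
    (hK : ∀ (x y : EuclideanSpace ℝ (Fin d)),
      K x y = ((∫ t, Real.exp (-(t : ℝ) * ‖x - y‖ ^ 2) ∂μ : ℝ) : ℂ))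
    (hG : ∀ (x y : EuclideanSpace ℝ (Fin d)),
      G x y = ((∫ t, Real.exp (-(t : ℝ) * ‖x - y‖ ^ 2) ∂ν : ℝ) : ℂ))
    (h : μ ≤ ENNReal.ofReal lam • ν) :
    IsPSDKernel (fun x y => (lam : ℂ) * G x y - K x y) := by
  intro n x c
  obtain ⟨Q, hQ0, hQ, hQi⟩ := exists_Q n x c
  rw [ker_form μ ν lam K G hK hG n x c Q hQ]
  have := integral_mono_measure h (ae_of_all _ hQ0)
    ((hQi ν).smul_measure ENNReal.ofReal_ne_top)
  rw [integral_smul_measure, ENNReal.toReal_ofReal hlam, smul_eq_mul] at this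
  exact_mod_cast sub_nonneg.2 this

lemma psd_mono {d : ℕ} (μ ν : Measure ℝ≥0) [IsFiniteMeasure μ] [IsFiniteMeasure ν]
    (lam lam' : ℝ) (hlam : lam ≤ lam')
    (K G : EuclideanSpace ℝ (Fin d) → EuclideanSpace ℝ (Fin d) → ℂ)
    (hK : ∀ (x y : EuclideanSpace ℝ (Fin d)),
      K x y = ((∫ t, Real.exp (-(t : ℝ) * ‖x - y‖ ^ 2) ∂μ : ℝ) : ℂ))
    (hG : ∀ (x y : EuclideanSpace ℝ (Fin d)),
      G x y = ((∫ t, Real.exp (-(t : ℝ) * ‖x - y‖ ^ 2) ∂ν : ℝ) : ℂ))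
    (h : IsPSDKernel (fun x y => (lam : ℂ) * G x y - K x y)) :
    IsPSDKernel (fun x y => (lam' : ℂ) * G x y - K x y) := by
  intro n x c
  obtain ⟨Q, hQ0, hQ, hQi⟩ := exists_Q n x c
  have h1 := h n x c
  rw [ker_form μ ν lam K G hK hG n x c Q hQ] at h1
  rw [ker_form μ ν lam' K G hK hG n x c Q hQ]
  have h1' : 0 ≤ lam * ∫ t, Q t ∂ν - ∫ t, Q t ∂μ := by exact_mod_cast h1
  have : 0 ≤ lam' * ∫ t, Q t ∂ν - ∫ t, Q t ∂μ := by
    nlinarith [integral_nonneg (μ := ν) (f := Q) (fun t => hQ0 t)]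
  exact_mod_cast this

lemma cont_to_le (μ ν : Measure unitInterval) [IsFiniteMeasure μ] [IsFiniteMeasure ν] (lam : ℝ)
    (hlam : 0 ≤ lam)
    (h : ∀ f : C(unitInterval, ℝ), (∀ x, 0 ≤ f x) → 0 ≤ lam * ∫ x, f x ∂ν - ∫ x, f x ∂μ) :
    μ ≤ ENNReal.ofReal lam • ν := by
  have : IsFiniteMeasure (ENNReal.ofReal lam • ν) := Measure.smul_finite _ ENNReal.ofReal_ne_top
  have hF : ∀ F : Set unitInterval, IsClosed F → μ F ≤ (ENNReal.ofReal lam • ν) F := by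
    intro F hF
    refine le_of_tendsto_of_tendsto' (HasOuterApproxClosed.tendsto_lintegral_apprSeq hF μ)
      (HasOuterApproxClosed.tendsto_lintegral_apprSeq hF (ENNReal.ofReal lam • ν)) fun n => ?_
    have hi : ∀ (ρ : Measure unitInterval) [IsFiniteMeasure ρ],
        Integrable (fun x => (hF.apprSeq n x : ℝ)) ρ := fun ρ _ =>
      Continuous.integrable_of_hasCompactSupport (by fun_prop)
        (HasCompactSupport.of_compactSpace _)
    rw [lintegral_coe_eq_integral _ (hi μ), lintegral_coe_eq_integral _ (hi _)]
    refine ENNReal.ofReal_le_ofReal ?_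
    rw [integral_smul_measure, ENNReal.toReal_ofReal hlam, smul_eq_mul]
    have := h ⟨fun x => (hF.apprSeq n x : ℝ), by fun_prop⟩ (fun x => NNReal.coe_nonneg _)
    simpa using this
  refine Measure.le_iff.2 fun s hs => ?_
  rw [hs.measure_eq_iSup_isClosed_of_ne_top (measure_ne_top _ _)]
  refine iSup_le fun F => iSup_le fun hFs => iSup_le fun hFc => ?_
  exact (hF F hFc).trans (measure_mono hFs)

lemma bern_to_cont (μ ν : Measure unitInterval) [IsFiniteMeasure μ] [IsFiniteMeasure ν] (lam : ℝ)
    (h : ∀ n m : ℕ, 0 ≤ lam * ∫ x : unitInterval, (1 - (x : ℝ)) ^ n * (x : ℝ) ^ m ∂ν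
      - ∫ x : unitInterval, (1 - (x : ℝ)) ^ n * (x : ℝ) ^ m ∂μ)
    (f : C(unitInterval, ℝ)) (hf : ∀ x, 0 ≤ f x) :
    0 ≤ lam * ∫ x, f x ∂ν - ∫ x, f x ∂μ := by
  have hi : ∀ (ρ : Measure unitInterval) [IsFiniteMeasure ρ] (g : unitInterval → ℝ),
      Continuous g → Integrable g ρ := fun ρ _ g hg =>
      Continuous.integrable_of_hasCompactSupport hg (HasCompactSupport.of_compactSpace _)
  have hB : ∀ n, 0 ≤ lam * ∫ x, bernsteinApproximation n f x ∂ν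
      - ∫ x, bernsteinApproximation n f x ∂μ := by
    intro n
    have e : ∀ (ρ : Measure unitInterval) [IsFiniteMeasure ρ],
        ∫ x, bernsteinApproximation n f x ∂ρ = ∑ k : Fin (n + 1),
          (f (bernstein.z k) * (n.choose k : ℝ)) *
          ∫ x : unitInterval, (1 - (x : ℝ)) ^ (n - k : ℕ) * (x : ℝ) ^ (k : ℕ) ∂ρ := by
      intro ρ _
      simp_rw [bernsteinApproximation.apply, bernstein_apply]
      rw [integral_finsetSum _ fun k _ => hi ρ _ (by fun_prop)]
      refine Finset.sum_congr rfl fun k _ => ?_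
      rw [← integral_const_mul]
      congr 1
      ext x
      simp only [smul_eq_mul]
      ring
    rw [e, e, Finset.mul_sum, ← Finset.sum_sub_distrib]
    refine Finset.sum_nonneg fun k _ => ?_
    have := mul_nonneg (mul_nonneg (hf (bernstein.z k)) (Nat.cast_nonneg (α := ℝ) (n.choose k)))
      (h (n - k) k)
    linarith
  have ht : ∀ (ρ : Measure unitInterval) [IsFiniteMeasure ρ],
      Filter.Tendsto (fun n => ∫ x, bernsteinApproximation n f x ∂ρ) Filter.atTop
        (nhds (∫ x, f x ∂ρ)) := by
    intro ρ _
    have hu := bernsteinApproximation_uniform f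
    refine tendsto_integral_filter_of_norm_le_const (Filter.Eventually.of_forall fun n =>
      (ContinuousMap.continuous _).aestronglyMeasurable) ⟨‖f‖ + 1, ?_⟩ (ae_of_all _ fun x => ?_)
    · filter_upwards [hu.norm.eventually_lt_const (lt_add_one ‖f‖)] with n hn
      exact ae_of_all _ fun x => ((ContinuousMap.norm_coe_le_norm _ x).trans hn.le)
    · exact ((continuous_eval_const x).tendsto f).comp hu
  exact ge_of_tendsto' (((ht ν).const_mul lam).sub (ht μ)) hB

section hard
variable (μ ν : Measure ℝ≥0) [IsFiniteMeasure μ] [IsFiniteMeasure ν] (lam : ℝ)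
    (K G : ∀ d : ℕ, EuclideanSpace ℝ (Fin d) → EuclideanSpace ℝ (Fin d) → ℂ)
    (hK : ∀ (d : ℕ) (x y : EuclideanSpace ℝ (Fin d)),
      K d x y = ((∫ t, Real.exp (-(t : ℝ) * ‖x - y‖ ^ 2) ∂μ : ℝ) : ℂ))
    (hG : ∀ (d : ℕ) (x y : EuclideanSpace ℝ (Fin d)),
      G d x y = ((∫ t, Real.exp (-(t : ℝ) * ‖x - y‖ ^ 2) ∂ν : ℝ) : ℂ))
    (H : ∀ d : ℕ, IsPSDKernel (fun x y => (lam : ℂ) * G d x y - K d x y))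
include hK hG H

lemma hard1 {ι J : Type*} [Fintype ι] [Fintype J] (x : J → EuclideanSpace ℝ ι) (c : J → ℝ)
    (Q : ℝ≥0 → ℝ)
    (hQ : ∀ t : ℝ≥0, Q t = ∑ j, ∑ k, c j * c k * Real.exp (-(t : ℝ) * ‖x j - x k‖ ^ 2)) :
    0 ≤ lam * ∫ t, Q t ∂ν - ∫ t, Q t ∂μ := by
  let e := Fintype.equivFin J
  let f := LinearIsometryEquiv.piLpCongrLeft 2 ℝ ℝ (Fintype.equivFin ι)
  have h := H _ _ (fun a => f (x (e.symm a))) (fun a => (c (e.symm a) : ℂ))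
  rw [ker_form μ ν lam _ _ (hK _) (hG _) _ _ _ Q] at h
  · exact_mod_cast h
  · intro t
    rw [hQ]
    push_cast
    rw [← e.symm.sum_comp]
    refine Finset.sum_congr rfl fun j _ => ?_
    rw [← e.symm.sum_comp]
    refine Finset.sum_congr rfl fun k _ => ?_
    rw [← map_sub, LinearIsometryEquiv.norm_map, Complex.conj_ofReal]

lemma hard2 (n m N : ℕ) :
    0 ≤ lam * ∫ t : ℝ≥0, (2 * (1 - Real.exp (-(t : ℝ)))) ^ n *
        (N + N * (N - 1) * Real.exp (-(t : ℝ)) ^ m) ∂ν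
      - ∫ t : ℝ≥0, (2 * (1 - Real.exp (-(t : ℝ)))) ^ n *
        (N + N * (N - 1) * Real.exp (-(t : ℝ)) ^ m) ∂μ := by
  classical
  let b : Bool → ℝ := fun b => if b then 1 else 0
  let sg : Bool → ℝ := fun b => if b then -1 else 1
  let s : ℝ := Real.sqrt (m / 2)
  have hs : s ^ 2 = m / 2 := Real.sq_sqrt (by positivity)
  let x : (Fin n → Bool) × Fin N → EuclideanSpace ℝ (Fin n ⊕ Fin N) := fun p =>
    WithLp.toLp 2 (Sum.elim (fun i => b (p.1 i)) (fun l => if l = p.2 then s else 0))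
  refine hard1 μ ν lam K G hK hG H x (fun p => ∏ i, sg (p.1 i)) _ fun t => ?_
  set u := Real.exp (-(t : ℝ)) with hu
  have key : ∀ p q, (∏ i, sg (p.1 i)) * (∏ i, sg (q.1 i)) *
      Real.exp (-(t : ℝ) * ‖x p - x q‖ ^ 2) =
      (∏ i, (sg (p.1 i) * sg (q.1 i) * Real.exp (-(t : ℝ) * (b (p.1 i) - b (q.1 i)) ^ 2))) *
      (if p.2 = q.2 then 1 else u ^ m) := by
    intro p q
    have h1 : ‖x p - x q‖ ^ 2 = (∑ i, (b (p.1 i) - b (q.1 i)) ^ 2) +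
        (if p.2 = q.2 then 0 else (m : ℝ)) := by
      rw [EuclideanSpace.norm_sq_eq, Fintype.sum_sum_type]
      congr 1
      · simp [x]
      · have : ∀ l, ‖(x p - x q) (Sum.inr l)‖ ^ 2 =
            (if l = p.2 then s ^ 2 else 0) + (if l = q.2 then s ^ 2 else 0)
              - 2 * (if l = p.2 then (if p.2 = q.2 then s ^ 2 else 0) else 0) := by
          intro l
          simp only [x, Real.norm_eq_abs, sq_abs, PiLp.sub_apply, Sum.elim_inr]
          split_ifs <;> first | ring1 | (exfalso; simp_all)
        simp_rw [this]
        rw [Finset.sum_sub_distrib, Finset.sum_add_distrib, ← Finset.mul_sum]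
        simp only [Finset.sum_ite_eq', Finset.mem_univ, if_true]
        split_ifs <;> rw [hs] <;> ring
    rw [h1, mul_add, Real.exp_add, Finset.mul_sum, Real.exp_sum, Finset.prod_mul_distrib,
      Finset.prod_mul_distrib, ← mul_assoc]
    congr 1
    split_ifs
    · simp
    · rw [hu, ← Real.exp_nat_mul]; congr 1; ring
  simp_rw [key]
  have sep : ∀ (F : (Fin n → Bool) → (Fin n → Bool) → ℝ) (D : Fin N → Fin N → ℝ),
      ∑ p : (Fin n → Bool) × Fin N, ∑ q : (Fin n → Bool) × Fin N, F p.1 q.1 * D p.2 q.2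
        = (∑ p, ∑ q, F p q) * ∑ i, ∑ j, D i j := by
    intro F D
    simp_rw [Fintype.sum_prod_type, Finset.sum_mul_sum]
  rw [sep (fun p q => ∏ i, (sg (p i) * sg (q i) * Real.exp (-(t : ℝ) * (b (p i) - b (q i)) ^ 2)))
    (fun i j => if i = j then 1 else u ^ m)]
  have hN : ∀ i : Fin N, (∑ j : Fin N, if i = j then (1 : ℝ) else u ^ m)
      = 1 + (N - 1) * u ^ m := by
    intro i
    have : ∀ j, (if i = j then (1 : ℝ) else u ^ m) = u ^ m + if i = j then (1 - u ^ m) else 0 := by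
      intro j; split_ifs <;> ring
    simp_rw [this]
    rw [Finset.sum_add_distrib]
    simp
    ring
  simp_rw [hN]
  simp only [Finset.sum_const, Finset.card_univ, Fintype.card_fin, nsmul_eq_mul]
  have h2 : ∀ p : Fin n → Bool, (∑ q : Fin n → Bool,
      ∏ i, (sg (p i) * sg (q i) * Real.exp (-(t : ℝ) * (b (p i) - b (q i)) ^ 2)))
      = ∏ i : Fin n, ∑ j : Bool, (sg (p i) * sg j * Real.exp (-(t : ℝ) * (b (p i) - b j) ^ 2)) := by
    intro p
    rw [Fintype.prod_sum]
  have h3 : (∑ p : Fin n → Bool, ∑ q : Fin n → Bool,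
      ∏ i, (sg (p i) * sg (q i) * Real.exp (-(t : ℝ) * (b (p i) - b (q i)) ^ 2)))
      = (2 * (1 - u)) ^ n := by
    simp_rw [h2]
    rw [← Fintype.prod_sum (fun (_ : Fin n) (p : Bool) => ∑ j : Bool,
      (sg p * sg j * Real.exp (-(t : ℝ) * (b p - b j) ^ 2)))]
    simp [sg, b]
    rw [← hu]; ring
  rw [h3]
  ring

lemma hard3 (n m : ℕ) :
    0 ≤ lam * ∫ t : ℝ≥0, (1 - Real.exp (-(t : ℝ))) ^ n * Real.exp (-(t : ℝ)) ^ m ∂ν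
      - ∫ t : ℝ≥0, (1 - Real.exp (-(t : ℝ))) ^ n * Real.exp (-(t : ℝ)) ^ m ∂μ := by
  have hi : ∀ (ρ : Measure ℝ≥0) [IsFiniteMeasure ρ] (k : ℕ), Integrable (fun t : ℝ≥0 =>
      (1 - Real.exp (-(t : ℝ))) ^ n * Real.exp (-(t : ℝ)) ^ k) ρ := by
    intro ρ _ k
    refine Integrable.of_bound (C := 1) (by fun_prop) (ae_of_all _ fun t => ?_)
    have h1 : Real.exp (-(t : ℝ)) ≤ 1 := by simp
    have h0 := Real.exp_nonneg (-(t : ℝ))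
    rw [Real.norm_eq_abs, abs_of_nonneg (mul_nonneg (pow_nonneg (by linarith) _) (by positivity))]
    exact mul_le_one₀ (pow_le_one₀ (by linarith) (by linarith)) (by positivity)
      (pow_le_one₀ h0 h1)
  have hI : ∀ (ρ : Measure ℝ≥0) [IsFiniteMeasure ρ] (N : ℕ),
      ∫ t : ℝ≥0, (2 * (1 - Real.exp (-(t : ℝ)))) ^ n *
        (N + N * (N - 1) * Real.exp (-(t : ℝ)) ^ m) ∂ρ =
      2 ^ n * (N * ∫ t : ℝ≥0, (1 - Real.exp (-(t : ℝ))) ^ n * Real.exp (-(t : ℝ)) ^ 0 ∂ρ +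
      (N * (N - 1)) * ∫ t : ℝ≥0, (1 - Real.exp (-(t : ℝ))) ^ n * Real.exp (-(t : ℝ)) ^ m ∂ρ) := by
    intro ρ _ N
    rw [← integral_const_mul, ← integral_const_mul,
      ← integral_add ((hi ρ 0).const_mul _) ((hi ρ m).const_mul _), ← integral_const_mul]
    congr 1
    ext t
    rw [mul_pow]; ring
  have h := hard2 μ ν lam K G hK hG H n m
  simp_rw [hI] at h
  set A := ∫ t : ℝ≥0, (1 - Real.exp (-(t : ℝ))) ^ n * Real.exp (-(t : ℝ)) ^ 0 ∂ν
  set A' := ∫ t : ℝ≥0, (1 - Real.exp (-(t : ℝ))) ^ n * Real.exp (-(t : ℝ)) ^ 0 ∂μ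
  set B := ∫ t : ℝ≥0, (1 - Real.exp (-(t : ℝ))) ^ n * Real.exp (-(t : ℝ)) ^ m ∂ν
  set B' := ∫ t : ℝ≥0, (1 - Real.exp (-(t : ℝ))) ^ n * Real.exp (-(t : ℝ)) ^ m ∂μ
  by_contra! hneg
  obtain ⟨N, hN⟩ := exists_nat_gt ((lam * A - A') / -(lam * B - B'))
  rw [div_lt_iff₀ (by linarith)] at hN
  have h' := h (N + 1)
  have h2 : (0 : ℝ) ≤ (2 ^ n * (N + 1)) * ((lam * A - A') + N * (lam * B - B')) := by
    refine h'.trans (le_of_eq ?_)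
    push_cast; ring
  have := nonneg_of_mul_nonneg_right h2 (by positivity)
  linarith

lemma hard4 (hlam : 0 ≤ lam) : μ ≤ ENNReal.ofReal lam • ν := by
  let φ : ℝ≥0 → unitInterval := fun t => ⟨Real.exp (-(t : ℝ)), Real.exp_nonneg _, by simp⟩
  have hφc : Continuous φ := by fun_prop
  have hφi : Function.Injective φ := by
    intro s t h
    have := congrArg Subtype.val h
    simpa [φ] using this
  have hφ : MeasurableEmbedding φ := hφc.measurableEmbedding hφi
  have h1 : μ.map φ ≤ ENNReal.ofReal lam • ν.map φ := by
    refine cont_to_le _ _ lam hlam (bern_to_cont _ _ lam fun n m => ?_)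
    rw [hφ.integral_map, hφ.integral_map]
    exact hard3 μ ν lam K G hK hG H n m
  refine Measure.le_iff.2 fun s hs => ?_
  have h2 := h1 (φ '' s)
  rwa [Measure.smul_apply, hφ.map_apply, hφ.map_apply, hφi.preimage_image] at h2

end hard

lemma le_iff_essSup (μ ν : Measure ℝ≥0) [IsFiniteMeasure μ] [IsFiniteMeasure ν] (r : ENNReal) :
    μ ≤ r • ν ↔ μ ≪ ν ∧ essSup (μ.rnDeriv ν) ν ≤ r := by
  constructor
  · intro h
    have hac : μ ≪ ν := (Measure.absolutelyContinuous_of_le h).trans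
      (Measure.AbsolutelyContinuous.rfl.smul_left r)
    refine ⟨hac, essSup_le_of_ae_le r ?_⟩
    refine ae_le_of_forall_setLIntegral_le_of_sigmaFinite (μ.measurable_rnDeriv ν) fun s hs _ => ?_
    rw [Measure.setLIntegral_rnDeriv hac, setLIntegral_const]
    exact h s
  · rintro ⟨hac, h⟩
    refine Measure.le_iff.2 fun s hs => ?_
    rw [← Measure.setLIntegral_rnDeriv hac, Measure.smul_apply, smul_eq_mul, ← setLIntegral_const]
    refine lintegral_mono_ae (ae_restrict_of_ae ?_)
    filter_upwards [ENNReal.ae_le_essSup (μ := ν) (μ.rnDeriv ν)] with t ht using ht.trans h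


/-- For radial kernels `K_d, G_d` given as Laplace transforms of finite positive Borel
measures `μ, ν` on `[0,∞)`, a single constant `λ ≥ 0` making `λG_d − K_d` positive
semidefinite for every dimension `d` exists iff `μ ≪ ν` with `dμ/dν` `ν`-essentially
bounded; in that case `sup_d λ(K_d, G_d)` equals the `ν`-essential supremum of `dμ/dν`. -/
theorem radial_inclusion_iff
    (μ ν : Measure ℝ≥0) [IsFiniteMeasure μ] [IsFiniteMeasure ν]
    (K G : ∀ d : ℕ, EuclideanSpace ℝ (Fin d) → EuclideanSpace ℝ (Fin d) → ℂ)
    (hK : ∀ (d : ℕ) (x y : EuclideanSpace ℝ (Fin d)),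
      K d x y = ((∫ t, Real.exp (-(t : ℝ) * ‖x - y‖ ^ 2) ∂μ : ℝ) : ℂ))
    (hG : ∀ (d : ℕ) (x y : EuclideanSpace ℝ (Fin d)),
      G d x y = ((∫ t, Real.exp (-(t : ℝ) * ‖x - y‖ ^ 2) ∂ν : ℝ) : ℂ)) :
    ((∃ lam : ℝ, 0 ≤ lam ∧ ∀ d : ℕ,
        IsPSDKernel (fun x y => (lam : ℂ) * G d x y - K d x y)) ↔
      (μ ≪ ν ∧ essSup (μ.rnDeriv ν) ν < ⊤)) ∧
    ((μ ≪ ν ∧ essSup (μ.rnDeriv ν) ν < ⊤) →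
      (⨆ d : ℕ, sInf {lam : ℝ | 0 ≤ lam ∧
          IsPSDKernel (fun x y => (lam : ℂ) * G d x y - K d x y)})
        = (essSup (μ.rnDeriv ν) ν).toReal) := by
  have hle : ∀ lam : ℝ, 0 ≤ lam → ((∀ d : ℕ,
      IsPSDKernel (fun x y => (lam : ℂ) * G d x y - K d x y)) ↔
        (μ ≪ ν ∧ essSup (μ.rnDeriv ν) ν ≤ ENNReal.ofReal lam)) := by
    intro lam h0
    rw [← le_iff_essSup]
    exact ⟨fun H => hard4 μ ν lam K G hK hG H h0,
      fun h d => psd_of_le μ ν lam h0 _ _ (hK d) (hG d) h⟩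
  refine ⟨⟨?_, ?_⟩, ?_⟩
  · rintro ⟨lam, h0, H⟩
    obtain ⟨h1, h2⟩ := (hle lam h0).1 H
    exact ⟨h1, h2.trans_lt ENNReal.ofReal_lt_top⟩
  · rintro ⟨h1, h2⟩
    exact ⟨_, ENNReal.toReal_nonneg, (hle _ ENNReal.toReal_nonneg).2
      ⟨h1, (ENNReal.ofReal_toReal h2.ne).ge⟩⟩
  · rintro ⟨h1, h2⟩
    set M := (essSup (μ.rnDeriv ν) ν).toReal with hM
    have hM0 : 0 ≤ M := ENNReal.toReal_nonneg
    have hMp := (hle M hM0).2 ⟨h1, (ENNReal.ofReal_toReal h2.ne).ge⟩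
    have hbb : ∀ d, BddBelow {lam : ℝ | 0 ≤ lam ∧
          IsPSDKernel (fun x y => (lam : ℂ) * G d x y - K d x y)} := fun d => ⟨0, fun _ h => h.1⟩
    have hub : ∀ d, sInf {lam : ℝ | 0 ≤ lam ∧
          IsPSDKernel (fun x y => (lam : ℂ) * G d x y - K d x y)} ≤ M := fun d =>
      csInf_le (hbb d) ⟨hM0, hMp d⟩
    refine le_antisymm (ciSup_le hub) (le_of_forall_pos_le_add fun ε hε => ?_)
    set S := ⨆ d : ℕ, sInf {lam : ℝ | 0 ≤ lam ∧
          IsPSDKernel (fun x y => (lam : ℂ) * G d x y - K d x y)} with hS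
    have hdS : ∀ d, sInf {lam : ℝ | 0 ≤ lam ∧
          IsPSDKernel (fun x y => (lam : ℂ) * G d x y - K d x y)} ≤ S := fun d =>
      le_ciSup (f := fun d : ℕ => sInf {lam : ℝ | 0 ≤ lam ∧
          IsPSDKernel (fun x y => (lam : ℂ) * G d x y - K d x y)})
        ⟨M, by rintro _ ⟨d, rfl⟩; exact hub d⟩ d
    have hS0 : 0 ≤ S := (Real.sInf_nonneg fun _ h => h.1).trans (hdS 0)
    have hall : ∀ d : ℕ,
        IsPSDKernel (fun x y => ((S + ε : ℝ) : ℂ) * G d x y - K d x y) := by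
      intro d
      obtain ⟨l, hl, hlt⟩ := exists_lt_of_csInf_lt (s := {lam : ℝ | 0 ≤ lam ∧
          IsPSDKernel (fun x y => (lam : ℂ) * G d x y - K d x y)}) ⟨M, hM0, hMp d⟩
        ((hdS d).trans_lt (lt_add_of_pos_right S hε))
      exact psd_mono μ ν l _ hlt.le _ _ (hK d) (hG d) hl.2
    have := ((hle (S + ε) (by positivity)).1 hall).2
    exact ENNReal.toReal_le_of_le_ofReal (by positivity) this
end

section
/- Let G_γ(x,y) = exp(−‖x−y‖²/γ) be the Gaussian kernel on ℝ^d with parameter γ > 0, where ‖·‖ is the Euclidean norm. For 0 < γ₁ < γ₂: (a) the function (γ₂/γ₁)^{d/2} G_{γ₁} − G_{γ₂} is a positive semidefinite kernel on ℝ^d; (b) (γ₂/γ₁)^{d/2} is the least constant λ ≥ 0 for which λG_{γ₁} − G_{γ₂} is a positive semidefinite kernel; (c) there is no λ ≥ 0 for which λG_{γ₂} − G_{γ₁} is a positive semidefinite kernel. -/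
open scoped ComplexOrder

/-- The Gaussian kernel `G_γ(x,y) = exp(−‖x−y‖²/γ)` on `ℝ^d`, as a complex-valued kernel. -/
noncomputable def gaussK (d : ℕ) (γ : ℝ) (x y : EuclideanSpace ℝ (Fin d)) : ℂ :=
  ((Real.exp (-‖x - y‖ ^ 2 / γ) : ℝ) : ℂ)

open MeasureTheory ProbabilityTheory

/-- iid sampling -/
lemma psd_integral {X : Type*} [MeasurableSpace X] (μ : Measure X) [IsProbabilityMeasure μ]
    (R : X → X → ℝ) (M : ℝ) (hR : Measurable (Function.uncurry R)) (hM : ∀ x y, |R x y| ≤ M)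
    (hpos : ∀ (n : ℕ) (x : Fin n → X), 0 ≤ ∑ j, ∑ k, R (x j) (x k)) :
    0 ≤ ∫ z, R z.1 z.2 ∂(μ.prod μ) := by
  set I := ∫ z, R z.1 z.2 ∂(μ.prod μ) with hI
  have key : ∀ n : ℕ, 0 ≤ (n : ℝ) * (M - I) + n ^ 2 * I := by
    intro n
    have hint : ∀ j k : Fin n, Integrable (fun x : Fin n → X => R (x j) (x k))
        (Measure.pi fun _ => μ) := by
      intro j k
      refine Integrable.of_bound (C := M) ?_ (Filter.Eventually.of_forall fun x => ?_)
      · have hjk : Measurable (fun x : Fin n → X => (x j, x k)) :=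
          (measurable_pi_apply j).prodMk (measurable_pi_apply k)
        exact (hR.comp hjk).aestronglyMeasurable
      · simpa using hM _ _
    have h0 : 0 ≤ ∫ x : Fin n → X, ∑ j, ∑ k, R (x j) (x k) ∂(Measure.pi fun _ => μ) :=
      integral_nonneg fun x => hpos n x
    rw [integral_finsetSum _ (fun j _ => integrable_finsetSum _ fun k _ => hint j k)] at h0
    have h1 : ∀ j k : Fin n, ∫ x : Fin n → X, R (x j) (x k) ∂(Measure.pi fun _ => μ)
        ≤ (if j = k then M - I else 0) + I := by
      intro j k
      split_ifs with hjk
      · calc _ ≤ ∫ x : Fin n → X, M ∂(Measure.pi fun _ => μ) :=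
              integral_mono (hint j k) (integrable_const _) fun x => (abs_le.1 (hM _ _)).2
          _ = _ := by simp
      · have hind : IndepFun (fun x : Fin n → X => x j) (fun x => x k) (Measure.pi fun _ => μ) :=
          (iIndepFun_pi (μ := fun _ : Fin n => μ) (X := fun _ x => x)
            (fun _ => aemeasurable_id)).indepFun hjk
        have hm := hind.map_prod_eq_prod_map_map (measurable_pi_apply j).aemeasurable
          (measurable_pi_apply k).aemeasurable
        have e : ∀ i : Fin n, (Measure.pi fun _ => μ).map (fun x : Fin n → X => x i) = μ :=
          fun i => (measurePreserving_eval (fun _ : Fin n => μ) i).map_eq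
        rw [e, e] at hm
        rw [zero_add, hI, ← hm, integral_map]
        · exact ((measurable_pi_apply j).prodMk (measurable_pi_apply k)).aemeasurable
        · exact hR.aestronglyMeasurable
    have h2 : ∑ j : Fin n, ∫ x : Fin n → X, ∑ k, R (x j) (x k) ∂(Measure.pi fun _ => μ)
        ≤ ∑ j : Fin n, ∑ k : Fin n, ((if j = k then M - I else 0) + I) := by
      refine Finset.sum_le_sum fun j _ => ?_
      rw [integral_finsetSum _ fun k _ => hint j k]
      exact Finset.sum_le_sum fun k _ => h1 j k
    have h3 : ∑ j : Fin n, ∑ k : Fin n, ((if j = k then M - I else 0) + I)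
        = (n : ℝ) * (M - I) + n ^ 2 * I := by
      simp [Finset.sum_add_distrib]; ring
    linarith
  by_contra hneg
  push Not at hneg
  obtain ⟨n, hn⟩ := exists_nat_gt ((M - I) / (-I))
  have hn' := (div_lt_iff₀ (by linarith)).1 hn
  have := key (n + 1)
  push_cast at this
  have hpos' : (0 : ℝ) < n + 1 := by positivity
  nlinarith [mul_pos hpos' (by linarith : 0 < (n : ℝ) * -I - (M - I)), mul_pos hpos' (neg_pos.2 hneg)]

lemma gauss_int (d : ℕ) (b : ℝ) (hb : 0 < b) (w : EuclideanSpace ℝ (Fin d)) :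
    ∫ v : EuclideanSpace ℝ (Fin d), Complex.exp (Complex.I * (inner ℝ w v : ℝ)) *
      (Real.exp (-b * ‖v‖ ^ 2) : ℝ) =
      (((Real.pi / b) ^ ((d : ℝ) / 2) * Real.exp (-‖w‖ ^ 2 / (4 * b)) : ℝ) : ℂ) := by
  have h := GaussianFourier.integral_cexp_neg_mul_sq_norm_add (b := (b : ℂ)) (by simpa using hb)
    Complex.I w
  convert h using 1
  · congr 1; ext v; push_cast; rw [← Complex.exp_add]; congr 1; ring
  · push_cast
    rw [Complex.ofReal_cpow (by positivity)]
    simp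

lemma gauss_integrable (d : ℕ) (b : ℝ) (hb : 0 < b) (w : EuclideanSpace ℝ (Fin d)) :
    Integrable (fun v : EuclideanSpace ℝ (Fin d) => Complex.exp (Complex.I * (inner ℝ w v : ℝ)) *
      (Real.exp (-b * ‖v‖ ^ 2) : ℝ)) := by
  have h := GaussianFourier.integrable_cexp_neg_mul_sq_norm_add (b := (b : ℂ)) (by simpa using hb)
    Complex.I w
  convert h using 1
  · ext v; push_cast; rw [← Complex.exp_add]; congr 1; ring

lemma re_eq (a r : ℝ) : (Complex.exp (Complex.I * (a : ℝ)) * (r : ℝ)).re = Real.cos a * r := by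
  rw [mul_comm Complex.I, Complex.re_mul_ofReal, Complex.exp_ofReal_mul_I_re]

lemma gauss_int_re (d : ℕ) (b : ℝ) (hb : 0 < b) (w : EuclideanSpace ℝ (Fin d)) :
    ∫ v : EuclideanSpace ℝ (Fin d), Real.cos (inner ℝ w v) * Real.exp (-b * ‖v‖ ^ 2) =
      (Real.pi / b) ^ ((d : ℝ) / 2) * Real.exp (-‖w‖ ^ 2 / (4 * b)) := by
  have h := congrArg Complex.re (gauss_int d b hb w)
  rw [Complex.ofReal_re] at h
  rw [← h]
  have := integral_re (𝕜 := ℂ) (gauss_integrable d b hb w)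
  simp only [RCLike.re_eq_complex_re, re_eq] at this
  exact this

lemma gauss_integrable_re (d : ℕ) (b : ℝ) (hb : 0 < b) (w : EuclideanSpace ℝ (Fin d)) :
    Integrable (fun v : EuclideanSpace ℝ (Fin d) =>
      Real.cos (inner ℝ w v) * Real.exp (-b * ‖v‖ ^ 2)) := by
  have := (gauss_integrable d b hb w).re
  simp only [RCLike.re_eq_complex_re, re_eq] at this
  exact this

lemma integ_exp (d : ℕ) (b : ℝ) (hb : 0 < b) :
    Integrable (fun v : EuclideanSpace ℝ (Fin d) => Real.exp (-b * ‖v‖ ^ 2)) := by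
  simpa using gauss_integrable_re d b hb 0

lemma int_exp (d : ℕ) (b : ℝ) (hb : 0 < b) :
    ∫ v : EuclideanSpace ℝ (Fin d), Real.exp (-b * ‖v‖ ^ 2) = (Real.pi / b) ^ ((d : ℝ) / 2) := by
  simpa using gauss_int_re d b hb 0

/-- testing against a gaussian density -/
lemma test_gauss (d : ℕ) (S : EuclideanSpace ℝ (Fin d) → ℝ) (M t : ℝ) (ht : 0 < t)
    (hS : Continuous S) (hM : ∀ x, |S x| ≤ M) (hSi : Integrable S)
    (hpos : ∀ (n : ℕ) (x : Fin n → EuclideanSpace ℝ (Fin d)), 0 ≤ ∑ j, ∑ k, S (x j - x k)) :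
    0 ≤ ∫ u, Real.exp (-t * ‖u‖ ^ 2) * S u := by
  set Z := (Real.pi / (2 * t)) ^ ((d : ℝ) / 2) with hZ
  have hZpos : 0 < Z := by positivity
  set p : EuclideanSpace ℝ (Fin d) → ℝ := fun x => Z⁻¹ * Real.exp (-(2 * t) * ‖x‖ ^ 2) with hp
  have hp0 : ∀ x, 0 ≤ p x := fun x => by positivity
  have hpc : Continuous p := by fun_prop
  have hpi : Integrable p := (integ_exp d (2 * t) (by positivity)).const_mul _
  have hp1 : ∫ x, p x = 1 := by
    rw [hp, integral_const_mul, int_exp d (2 * t) (by positivity), ← hZ]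
    field_simp
  let μ : Measure (EuclideanSpace ℝ (Fin d)) := volume.withDensity fun x => ENNReal.ofReal (p x)
  have hμ : IsProbabilityMeasure μ := by
    constructor
    rw [withDensity_apply _ MeasurableSet.univ, Measure.restrict_univ,
      ← ofReal_integral_eq_lintegral_ofReal hpi (Filter.Eventually.of_forall hp0), hp1]
    simp
  have h0 := psd_integral μ (fun x y => S (x - y)) M
    (hS.comp (continuous_fst.sub continuous_snd)).measurable (fun x y => hM _) hpos
  have hw : ∀ g : EuclideanSpace ℝ (Fin d) → ℝ, ∫ x, g x ∂μ = ∫ x, p x * g x := by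
    intro g
    rw [integral_withDensity_eq_integral_toReal_smul (by fun_prop) (by simp)]
    simp [ENNReal.toReal_ofReal (hp0 _)]
  rw [integral_prod] at h0
  swap
  · refine Integrable.of_bound (C := M)
      (hS.comp (continuous_fst.sub continuous_snd)).aestronglyMeasurable
      (Filter.Eventually.of_forall fun x => ?_)
    simpa using hM _
  rw [hw] at h0
  simp only [hw] at h0
  have e1 : ∀ x, p x * ∫ y, p y * S (x - y) = ∫ u, p x * (S u * p (x - u)) := by
    intro x
    rw [integral_const_mul, ← integral_sub_left_eq_self _ volume x]
    simp [mul_comm]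
  simp only [e1] at h0
  rw [integral_integral_swap] at h0
  swap
  · have := (hSi.convolution_integrand (ContinuousLinearMap.mul ℝ ℝ) hpi)
    refine this.bdd_mul (c := Z⁻¹) (hpc.comp continuous_fst).aestronglyMeasurable
      (Filter.Eventually.of_forall fun z => ?_)
    rw [Real.norm_of_nonneg (hp0 _)]
    simp only [hp]
    refine mul_le_of_le_one_right (by positivity) (Real.exp_le_one_iff.2 ?_)
    have : 0 ≤ 2 * t * ‖z.1‖ ^ 2 := by positivity
    linarith
  have e2 : ∀ u, ∫ x, p x * (S u * p (x - u)) =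
      (Z⁻¹ * Z⁻¹ * (Real.pi / (4 * t)) ^ ((d : ℝ) / 2)) * (Real.exp (-t * ‖u‖ ^ 2) * S u) := by
    intro u
    have : ∀ x, p x * (S u * p (x - u)) = (Z⁻¹ * Z⁻¹ * (Real.exp (-t * ‖u‖ ^ 2) * S u)) *
        Real.exp (-(4 * t) * ‖x - (1 / 2 : ℝ) • u‖ ^ 2) := by
      intro x
      have : Real.exp (-(2 * t) * ‖x‖ ^ 2) * Real.exp (-(2 * t) * ‖x - u‖ ^ 2)
        = Real.exp (-t * ‖u‖ ^ 2) * Real.exp (-(4 * t) * ‖x - (1 / 2 : ℝ) • u‖ ^ 2) := by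
        rw [← Real.exp_add, ← Real.exp_add, norm_sub_sq_real, norm_sub_sq_real, inner_smul_right,
          norm_smul]
        congr 1
        norm_num
        ring
      simp only [hp]
      linear_combination (Z⁻¹ * Z⁻¹ * S u) * this
    simp only [this]
    rw [integral_const_mul, integral_sub_right_eq_self
      (fun x => Real.exp (-(4 * t) * ‖x‖ ^ 2)), int_exp d _ (by positivity)]
    ring
  simp only [e2] at h0
  rw [integral_const_mul] at h0
  exact nonneg_of_mul_nonneg_right h0 (by positivity)

/-- necessary condition -/
lemma psd_nec (d : ℕ) (a b lam t : ℝ) (ha : 0 < a) (hb : 0 < b) (ht : 0 < t)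
    (w : EuclideanSpace ℝ (Fin d))
    (h : IsPSDKernel (fun x y : EuclideanSpace ℝ (Fin d) =>
          (lam : ℂ) * gaussK d a x y - gaussK d b x y)) :
    (Real.pi / (t + 1 / b)) ^ ((d : ℝ) / 2) * Real.exp (-‖w‖ ^ 2 / (4 * (t + 1 / b))) ≤
    lam * ((Real.pi / (t + 1 / a)) ^ ((d : ℝ) / 2) * Real.exp (-‖w‖ ^ 2 / (4 * (t + 1 / a)))) := by
  have ha' : 0 < 1 / a := by positivity
  have hb' : 0 < 1 / b := by positivity
  have hpos := test_gauss d (fun u => lam * (Real.cos (inner ℝ w u) * Real.exp (-(1 / a) * ‖u‖ ^ 2))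
    - Real.cos (inner ℝ w u) * Real.exp (-(1 / b) * ‖u‖ ^ 2)) (|lam| + 1) t ht (by fun_prop) ?_
    (((gauss_integrable_re d _ ha' w).const_mul _).sub (gauss_integrable_re d _ hb' w)) ?_
  · have e : ∀ u : EuclideanSpace ℝ (Fin d), Real.exp (-t * ‖u‖ ^ 2) *
      (lam * (Real.cos (inner ℝ w u) * Real.exp (-(1 / a) * ‖u‖ ^ 2))
        - Real.cos (inner ℝ w u) * Real.exp (-(1 / b) * ‖u‖ ^ 2)) =
      lam * (Real.cos (inner ℝ w u) * Real.exp (-(t + 1 / a) * ‖u‖ ^ 2))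
        - Real.cos (inner ℝ w u) * Real.exp (-(t + 1 / b) * ‖u‖ ^ 2) := by
      intro u
      have h1 : ∀ c : ℝ, Real.exp (-(t + c) * ‖u‖ ^ 2) =
        Real.exp (-t * ‖u‖ ^ 2) * Real.exp (-c * ‖u‖ ^ 2) := by
        intro c; rw [← Real.exp_add]; congr 1; ring
      rw [h1, h1]; ring
    simp only [e] at hpos
    rw [integral_sub ((gauss_integrable_re d _ (by positivity) w).const_mul _)
      (gauss_integrable_re d _ (by positivity) w), integral_const_mul,
      gauss_int_re d _ (by positivity), gauss_int_re d _ (by positivity)] at hpos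
    linarith
  · intro u
    have hc : ∀ c : ℝ, 0 < c → |Real.cos (inner ℝ w u) * Real.exp (-c * ‖u‖ ^ 2)| ≤ 1 := by
      intro c hc
      rw [abs_mul, abs_of_pos (Real.exp_pos _)]
      refine mul_le_one₀ (Real.abs_cos_le_one _) (Real.exp_pos _).le (Real.exp_le_one_iff.2 ?_)
      have : 0 ≤ c * ‖u‖ ^ 2 := by positivity
      linarith
    refine (abs_sub _ _).trans (add_le_add ?_ (hc _ hb'))
    rw [abs_mul]
    exact mul_le_of_le_one_right (abs_nonneg _) (hc _ ha')
  · intro n x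
    have h1 := (Complex.le_def.1 (h n x fun j => Complex.exp (Complex.I * (inner ℝ w (x j) : ℝ)))).1
    simp only [Complex.zero_re, Complex.re_sum] at h1
    refine h1.trans_eq (Finset.sum_congr rfl fun j _ => Finset.sum_congr rfl fun k _ => ?_)
    have h2 : Complex.exp (Complex.I * (inner ℝ w (x j) : ℝ)) *
      (starRingEnd ℂ) (Complex.exp (Complex.I * (inner ℝ w (x k) : ℝ))) =
      Complex.exp (Complex.I * (inner ℝ w (x j - x k) : ℝ)) := by
      rw [← Complex.exp_conj, ← Complex.exp_add, inner_sub_right]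
      congr 1
      simp
      ring
    rw [h2]
    have h3 : (lam : ℂ) * gaussK d a (x j) (x k) - gaussK d b (x j) (x k) =
      ((lam * Real.exp (-(1 / a) * ‖x j - x k‖ ^ 2) - Real.exp (-(1 / b) * ‖x j - x k‖ ^ 2) : ℝ) : ℂ) := by
      simp only [gaussK]
      push_cast
      congr 3 <;> ring_nf
    rw [h3, re_eq]
    ring

lemma gaussK_repr (d : ℕ) (γ : ℝ) (hγ : 0 < γ) (x y : EuclideanSpace ℝ (Fin d)) :
    gaussK d γ x y = ∫ v : EuclideanSpace ℝ (Fin d),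
      Complex.exp (Complex.I * (inner ℝ (x - y) v : ℝ)) *
      (((γ / (4 * Real.pi)) ^ ((d : ℝ) / 2) * Real.exp (-(γ / 4) * ‖v‖ ^ 2) : ℝ) : ℂ) := by
  have h := gauss_int d (γ / 4) (by positivity) (x - y)
  have e : ∀ v : EuclideanSpace ℝ (Fin d), Complex.exp (Complex.I * (inner ℝ (x - y) v : ℝ)) *
      (((γ / (4 * Real.pi)) ^ ((d : ℝ) / 2) * Real.exp (-(γ / 4) * ‖v‖ ^ 2) : ℝ) : ℂ) =
      (((γ / (4 * Real.pi)) ^ ((d : ℝ) / 2) : ℝ) : ℂ) *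
       (Complex.exp (Complex.I * (inner ℝ (x - y) v : ℝ)) * (Real.exp (-(γ / 4) * ‖v‖ ^ 2) : ℝ)) := by
    intro v; push_cast; ring
  simp only [e]
  rw [integral_const_mul, h, ← Complex.ofReal_mul, ← mul_assoc,
    ← Real.mul_rpow (by positivity) (by positivity)]
  have : γ / (4 * Real.pi) * (Real.pi / (γ / 4)) = 1 := by
    have := Real.pi_pos
    field_simp
  rw [this, Real.one_rpow, one_mul, gaussK]
  congr 3
  field_simp

lemma psd_suff (d : ℕ) (γ₁ γ₂ : ℝ) (hγ₁ : 0 < γ₁) (h₁₂ : γ₁ < γ₂) :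
    IsPSDKernel (fun x y : EuclideanSpace ℝ (Fin d) =>
      (((γ₂ / γ₁) ^ ((d : ℝ) / 2) : ℝ) : ℂ) * gaussK d γ₁ x y - gaussK d γ₂ x y) := by
  have hγ₂ := hγ₁.trans h₁₂
  set q : EuclideanSpace ℝ (Fin d) → ℝ := fun v => (γ₂ / (4 * Real.pi)) ^ ((d : ℝ) / 2) *
    (Real.exp (-(γ₁ / 4) * ‖v‖ ^ 2) - Real.exp (-(γ₂ / 4) * ‖v‖ ^ 2)) with hq
  have hq0 : ∀ v, 0 ≤ q v := by
    intro v
    refine mul_nonneg (by positivity) (sub_nonneg.2 (Real.exp_le_exp.2 ?_))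
    nlinarith [sq_nonneg ‖v‖]
  have hqi : ∀ w : EuclideanSpace ℝ (Fin d), Integrable
      (fun v => Complex.exp (Complex.I * (inner ℝ w v : ℝ)) * (q v : ℂ)) := by
    intro w
    have := ((gauss_integrable d (γ₁ / 4) (by positivity) w).sub
      (gauss_integrable d (γ₂ / 4) (by positivity) w)).const_mul
      (((γ₂ / (4 * Real.pi)) ^ ((d : ℝ) / 2) : ℝ) : ℂ)
    refine this.congr (Filter.Eventually.of_forall fun v => ?_)
    simp only [hq, Pi.sub_apply]
    push_cast
    ring
  have hrep : ∀ x y : EuclideanSpace ℝ (Fin d),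
      (((γ₂ / γ₁) ^ ((d : ℝ) / 2) : ℝ) : ℂ) * gaussK d γ₁ x y - gaussK d γ₂ x y =
      ∫ v, Complex.exp (Complex.I * (inner ℝ (x - y) v : ℝ)) * (q v : ℂ) := by
    intro x y
    have hi : ∀ c γ : ℝ, 0 < γ → Integrable fun v : EuclideanSpace ℝ (Fin d) =>
      Complex.exp (Complex.I * (inner ℝ (x - y) v : ℝ)) *
        ((c * Real.exp (-(γ / 4) * ‖v‖ ^ 2) : ℝ) : ℂ) := by
      intro c γ hγ
      refine ((gauss_integrable d (γ / 4) (by positivity) (x - y)).const_mul (c : ℂ)).congr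
        (Filter.Eventually.of_forall fun v => ?_)
      push_cast
      ring
    rw [gaussK_repr d γ₁ hγ₁, gaussK_repr d γ₂ hγ₂, ← integral_const_mul,
      ← integral_sub ((hi _ _ hγ₁).const_mul _) (hi _ _ hγ₂)]
    congr 1
    ext v
    have e : (γ₂ / (4 * Real.pi)) ^ ((d : ℝ) / 2) =
        (γ₂ / γ₁) ^ ((d : ℝ) / 2) * (γ₁ / (4 * Real.pi)) ^ ((d : ℝ) / 2) := by
      rw [← Real.mul_rpow (by positivity) (by positivity)]
      congr 1
      field_simp
    simp only [hq, e]
    push_cast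
    ring
  clear_value q
  intro n x c
  simp only [hrep]
  have hsum : ∑ j, ∑ k, c j * (starRingEnd ℂ) (c k) *
      ∫ v, Complex.exp (Complex.I * (inner ℝ (x j - x k) v : ℝ)) * (q v : ℂ) =
      ∫ v, ((q v * Complex.normSq (∑ j, c j * Complex.exp (Complex.I * (inner ℝ (x j) v : ℝ))) : ℝ) : ℂ) := by
    simp only [← integral_const_mul]
    simp_rw [← integral_finsetSum Finset.univ (fun k _ => (hqi (x _ - x k)).const_mul
      (c _ * (starRingEnd ℂ) (c k)))]
    rw [← integral_finsetSum]
    swap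
    · intro j _
      exact integrable_finsetSum _ fun k _ => (hqi _).const_mul _
    congr 1
    ext v
    rw [Complex.ofReal_mul, ← Complex.mul_conj, map_sum, Finset.sum_mul_sum, Finset.mul_sum]
    refine Finset.sum_congr rfl fun j _ => ?_
    rw [Finset.mul_sum]
    refine Finset.sum_congr rfl fun k _ => ?_
    have h2 : Complex.exp (Complex.I * (inner ℝ (x j - x k) v : ℝ)) =
      Complex.exp (Complex.I * (inner ℝ (x j) v : ℝ)) *
      (starRingEnd ℂ) (Complex.exp (Complex.I * (inner ℝ (x k) v : ℝ))) := by
      rw [← Complex.exp_conj, ← Complex.exp_add, inner_sub_left]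
      congr 1
      simp
      ring
    rw [h2, map_mul]
    ring
  rw [hsum, integral_complex_ofReal]
  exact Complex.zero_le_real.2 (integral_nonneg fun v => mul_nonneg (hq0 v) (Complex.normSq_nonneg _))

lemma part_b (d : ℕ) (γ₁ γ₂ lam : ℝ) (hγ₁ : 0 < γ₁) (h₁₂ : γ₁ < γ₂)
    (h : IsPSDKernel (fun x y : EuclideanSpace ℝ (Fin d) =>
          (lam : ℂ) * gaussK d γ₁ x y - gaussK d γ₂ x y)) :
    (γ₂ / γ₁) ^ ((d : ℝ) / 2) ≤ lam := by
  have hγ₂ := hγ₁.trans h₁₂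
  have h1 : ∀ t : ℝ, 0 < t → (Real.pi / (t + 1 / γ₂)) ^ ((d : ℝ) / 2) ≤
      lam * (Real.pi / (t + 1 / γ₁)) ^ ((d : ℝ) / 2) := by
    intro t ht
    simpa using psd_nec d γ₁ γ₂ lam t hγ₁ hγ₂ ht 0 h
  have hc : ∀ γ : ℝ, 0 < γ → Filter.Tendsto (fun t : ℝ => (Real.pi / (t + 1 / γ)) ^ ((d : ℝ) / 2))
      (nhdsWithin 0 (Set.Ioi 0)) (nhds ((Real.pi / (0 + 1 / γ)) ^ ((d : ℝ) / 2))) := by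
    intro γ hγ
    have : ContinuousAt (fun t : ℝ => (Real.pi / (t + 1 / γ)) ^ ((d : ℝ) / 2)) 0 := by
      refine ContinuousAt.rpow_const (ContinuousAt.div (by fun_prop) (by fun_prop) (by positivity))
        (Or.inr (by positivity))
    exact this.tendsto.mono_left nhdsWithin_le_nhds
  have h2 := le_of_tendsto_of_tendsto (hc γ₂ hγ₂) ((hc γ₁ hγ₁).const_mul lam)
    (Filter.eventually_of_mem self_mem_nhdsWithin fun t ht => h1 t ht)
  have e : (Real.pi / (0 + 1 / γ₂)) = (γ₂ / γ₁) * (Real.pi / (0 + 1 / γ₁)) := by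
    simp; field_simp
  rw [e, Real.mul_rpow (by positivity) (by positivity)] at h2
  exact le_of_mul_le_mul_right h2 (by positivity)

lemma part_c (d : ℕ) (hd : 0 < d) (γ₁ γ₂ lam : ℝ) (hγ₁ : 0 < γ₁) (h₁₂ : γ₁ < γ₂)
    (h : IsPSDKernel (fun x y : EuclideanSpace ℝ (Fin d) =>
          (lam : ℂ) * gaussK d γ₂ x y - gaussK d γ₁ x y)) : False := by
  have hγ₂ := hγ₁.trans h₁₂
  have h1 := fun r : ℝ => psd_nec d γ₂ γ₁ lam 1 hγ₂ hγ₁ one_pos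
    (EuclideanSpace.single (⟨0, hd⟩ : Fin d) r) h
  simp only [EuclideanSpace.norm_single, Real.norm_eq_abs, sq_abs] at h1
  set B₁ := 1 + 1 / γ₁
  set B₂ := 1 + 1 / γ₂
  have hB₂ : 0 < B₂ := by positivity
  have hB : B₂ < B₁ := by
    have := one_div_lt_one_div_of_lt hγ₁ h₁₂
    simp only [B₁, B₂]; linarith
  have hB₁ := hB₂.trans hB
  set P₁ := (Real.pi / B₁) ^ ((d : ℝ) / 2)
  set P₂ := (Real.pi / B₂) ^ ((d : ℝ) / 2)
  have hP₁ : 0 < P₁ := by positivity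
  set κ := 1 / (4 * B₂) - 1 / (4 * B₁)
  have hκ : 0 < κ := sub_pos.2 (one_div_lt_one_div_of_lt (by positivity) (by linarith))
  have h2 : ∀ r : ℝ, P₁ * (κ * r ^ 2) ≤ lam * P₂ := by
    intro r
    have e : Real.exp (-r ^ 2 / (4 * B₁)) = Real.exp (κ * r ^ 2) * Real.exp (-r ^ 2 / (4 * B₂)) := by
      rw [← Real.exp_add]; congr 1; simp only [κ]; ring
    have h3 := h1 r
    rw [e, ← mul_assoc, ← mul_assoc] at h3
    have h4 := le_of_mul_le_mul_right h3 (Real.exp_pos _)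
    have h5 := Real.add_one_le_exp (κ * r ^ 2)
    nlinarith
  have h6 := h2 (lam * P₂ / (P₁ * κ) + 1)
  have h7 : (P₁ * κ) * (lam * P₂ / (P₁ * κ)) = lam * P₂ := by field_simp
  set s := lam * P₂ / (P₁ * κ)
  have hPk : 0 < P₁ * κ := by positivity
  have h8 : (P₁ * κ) * (s + 1) ^ 2 ≤ (P₁ * κ) * s := by rw [h7]; linarith
  have := le_of_mul_le_mul_left h8 hPk
  nlinarith [sq_nonneg (s + 1 / 2)]

/-- For `0 < γ₁ < γ₂`: `(γ₂/γ₁)^{d/2} G_{γ₁} − G_{γ₂}` is a positive semidefinite kernel,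
`(γ₂/γ₁)^{d/2}` is the least such constant, and no `λ ≥ 0` makes `λG_{γ₂} − G_{γ₁}`
positive semidefinite. -/
theorem gaussian_inclusion (d : ℕ) (hd : 0 < d) (γ₁ γ₂ : ℝ) (hγ₁ : 0 < γ₁) (h₁₂ : γ₁ < γ₂) :
    IsPSDKernel (fun x y : EuclideanSpace ℝ (Fin d) =>
      (((γ₂ / γ₁) ^ ((d : ℝ) / 2) : ℝ) : ℂ) * gaussK d γ₁ x y - gaussK d γ₂ x y) ∧
    IsLeast {lam : ℝ | 0 ≤ lam ∧
        IsPSDKernel (fun x y : EuclideanSpace ℝ (Fin d) =>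
          (lam : ℂ) * gaussK d γ₁ x y - gaussK d γ₂ x y)}
      ((γ₂ / γ₁) ^ ((d : ℝ) / 2)) ∧
    ¬ ∃ lam : ℝ, 0 ≤ lam ∧
      IsPSDKernel (fun x y : EuclideanSpace ℝ (Fin d) =>
        (lam : ℂ) * gaussK d γ₂ x y - gaussK d γ₁ x y) := by
  refine ⟨psd_suff d γ₁ γ₂ hγ₁ h₁₂, ⟨⟨?_, psd_suff d γ₁ γ₂ hγ₁ h₁₂⟩, ?_⟩, ?_⟩
  · have := hγ₁.trans h₁₂
    positivity
  · rintro lam ⟨_, h⟩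
    exact part_b d γ₁ γ₂ lam hγ₁ h₁₂ h
  · rintro ⟨lam, _, h⟩
    exact part_c d hd γ₁ γ₂ lam hγ₁ h₁₂ h
end

section
/- Let E_σ(x,y) = exp(−‖x−y‖₁/σ) be the ℓ¹-norm exponential kernel on ℝ^d with parameter σ > 0, where ‖z‖₁ = ∑_{j=1}^d |z_j|. For 0 < σ₁ < σ₂: (a) (σ₂/σ₁)^d E_{σ₂} − E_{σ₁} is a positive semidefinite kernel on ℝ^d, and (σ₂/σ₁)^d is the least constant λ ≥ 0 for which λE_{σ₂} − E_{σ₁} is a positive semidefinite kernel; (b) (σ₂/σ₁)^d E_{σ₁} − E_{σ₂} is a positive semidefinite kernel on ℝ^d, and (σ₂/σ₁)^d is the least constant λ ≥ 0 for which λE_{σ₁} − E_{σ₂} is a positive semidefinite kernel. -/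
open scoped ComplexOrder

/-- The `ℓ¹`-norm exponential kernel `E_σ(x,y) = exp(−‖x−y‖₁/σ)` on `ℝ^d`. -/
noncomputable def l1expK (d : ℕ) (σ : ℝ) (x y : EuclideanSpace ℝ (Fin d)) : ℂ :=
  ((Real.exp (-(∑ j, |x j - y j|) / σ) : ℝ) : ℂ)

open MeasureTheory Filter Topology

noncomputable def cw (a t : ℝ) : ℝ := 2 * a / (a ^ 2 + (2 * Real.pi * t) ^ 2)

lemma cw_nonneg {a : ℝ} (ha : 0 < a) (t : ℝ) : 0 ≤ cw a t := by
  unfold cw; positivity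

lemma cw_integrable {a : ℝ} (ha : 0 < a) : Integrable (cw a) := by
  have h := (integrable_inv_one_add_sq.comp_mul_right' (R := 2 * Real.pi / a)
    (by have := Real.pi_pos; positivity)).const_mul (2 / a)
  refine h.congr (Eventually.of_forall fun t => ?_)
  simp only [cw]
  field_simp

lemma exp_abs_integrable {a : ℝ} (ha : 0 < a) (b : ℝ) :
    IntegrableOn (fun t : ℝ => Complex.exp ((a + b * Complex.I) * t)) (Set.Iic 0) ∧
    IntegrableOn (fun t : ℝ => Complex.exp ((-a + b * Complex.I) * t)) (Set.Ioi 0) :=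
  ⟨integrableOn_exp_mul_complex_Iic (by simpa using ha) 0,
   integrableOn_exp_mul_complex_Ioi (by simpa using ha) 0⟩

lemma exp_abs_ft {a : ℝ} (ha : 0 < a) (b : ℝ) :
    Integrable (fun t : ℝ => Complex.exp (b * t * Complex.I) * (Real.exp (-a * |t|) : ℂ)) ∧
    ∫ t : ℝ, Complex.exp (b * t * Complex.I) * (Real.exp (-a * |t|) : ℂ)
      = ((2 * a / (a ^ 2 + b ^ 2) : ℝ) : ℂ) := by
  obtain ⟨h1, h2⟩ := exp_abs_integrable ha b
  have e1 : Set.EqOn (fun t : ℝ => Complex.exp ((a + b * Complex.I) * t))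
      (fun t : ℝ => Complex.exp (b * t * Complex.I) * (Real.exp (-a * |t|) : ℂ)) (Set.Iic 0) := by
    intro t ht
    simp only [Set.mem_Iic] at ht
    simp only [abs_of_nonpos ht, Complex.ofReal_exp, ← Complex.exp_add]
    congr 1; push_cast; ring
  have e2 : Set.EqOn (fun t : ℝ => Complex.exp ((-a + b * Complex.I) * t))
      (fun t : ℝ => Complex.exp (b * t * Complex.I) * (Real.exp (-a * |t|) : ℂ)) (Set.Ioi 0) := by
    intro t ht
    simp only [Set.mem_Ioi] at ht
    simp only [abs_of_pos ht, Complex.ofReal_exp, ← Complex.exp_add]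
    congr 1; push_cast; ring
  have h1' := h1.congr_fun e1 measurableSet_Iic
  have h2' := h2.congr_fun e2 measurableSet_Ioi
  refine ⟨?_, ?_⟩
  · have := h1'.union h2'
    rwa [Set.Iic_union_Ioi, integrableOn_univ] at this
  · rw [← intervalIntegral.integral_Iic_add_Ioi h1' h2', ← setIntegral_congr_fun measurableSet_Iic e1,
      ← setIntegral_congr_fun measurableSet_Ioi e2,
      integral_exp_mul_complex_Iic (by simpa using ha), integral_exp_mul_complex_Ioi (by simpa using ha)]
    have n1 : (a + b * Complex.I : ℂ) ≠ 0 := fun h => ha.ne' (by simpa using congrArg Complex.re h)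
    have n2 : (-a + b * Complex.I : ℂ) ≠ 0 := fun h => ha.ne' (by simpa using congrArg Complex.re h)
    have n3 : (a ^ 2 + b ^ 2 : ℂ) ≠ 0 := by
      have : (a ^ 2 + b ^ 2 : ℝ) ≠ 0 := by positivity
      exact_mod_cast this
    push_cast
    simp only [mul_zero, Complex.exp_zero]
    field_simp
    ring_nf
    simp only [Complex.I_sq]
    ring

lemma exp_abs_rep {a : ℝ} (ha : 0 < a) (x : ℝ) :
    ((Real.exp (-a * |x|) : ℝ) : ℂ) =
      ∫ t : ℝ, (cw a t : ℂ) * Complex.exp ((2 * Real.pi * t * x : ℝ) * Complex.I) := by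
  have hF : FourierTransform.fourier (fun t : ℝ => ((Real.exp (-a * |t|) : ℝ) : ℂ)) = fun w => (cw a w : ℂ) := by
    ext w
    rw [Real.fourier_real_eq_integral_exp_smul]
    have := (exp_abs_ft ha (-2 * Real.pi * w)).2
    simp only [smul_eq_mul]
    rw [cw, show (2 * Real.pi * w)^2 = (-2 * Real.pi * w)^2 by ring, ← this]
    congr 1; ext t; congr 3; push_cast; ring
  have hI : Integrable (fun t : ℝ => ((Real.exp (-a * |t|) : ℝ) : ℂ)) := by
    simpa using (exp_abs_ft ha 0).1
  have hc : Continuous (fun t : ℝ => ((Real.exp (-a * |t|) : ℝ) : ℂ)) := by fun_prop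
  have := congrFun (hc.fourierInv_fourier_eq hI (by rw [hF]; exact (cw_integrable ha).ofReal)) x
  rw [hF, Real.fourierInv_eq'] at this
  rw [← this]
  congr 1; ext t
  simp only [smul_eq_mul]
  rw [mul_comm]
  congr 3
  simp
  ring

noncomputable def ph {d : ℕ} (x : EuclideanSpace ℝ (Fin d)) (w : Fin d → ℝ) : ℂ :=
  ∏ i, Complex.exp ((2 * Real.pi * w i * x i : ℝ) * Complex.I)

lemma ph_norm {d : ℕ} (x : EuclideanSpace ℝ (Fin d)) (w : Fin d → ℝ) : ‖ph x w‖ = 1 := by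
  simp only [ph, norm_prod, Complex.norm_exp_ofReal_mul_I, Finset.prod_const_one]

lemma ph_cont {d : ℕ} (x : EuclideanSpace ℝ (Fin d)) : Continuous (ph x) := by
  unfold ph; fun_prop

lemma l1_rep (d : ℕ) {σ : ℝ} (hσ : 0 < σ) (x y : EuclideanSpace ℝ (Fin d)) :
    l1expK d σ x y = ∫ w : Fin d → ℝ,
      ((∏ i, cw σ⁻¹ (w i) : ℝ) : ℂ) * (ph x w * (starRingEnd ℂ) (ph y w)) := by
  have h : l1expK d σ x y = ∏ i, ((Real.exp (-σ⁻¹ * |x i - y i|) : ℝ) : ℂ) := by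
    rw [l1expK, ← Complex.ofReal_prod, ← Real.exp_sum, ← Finset.mul_sum]
    congr 2; field_simp
  rw [h]
  simp_rw [exp_abs_rep (inv_pos.2 hσ)]
  rw [← integral_fintype_prod_volume_eq_prod]
  congr 1; ext w
  simp only [ph, map_prod, Complex.ofReal_prod, ← Finset.prod_mul_distrib, ← Complex.exp_conj]
  refine Finset.prod_congr rfl fun i _ => ?_
  rw [← Complex.exp_add]
  congr 1
  simp only [map_mul, Complex.conj_I, Complex.conj_ofReal]
  push_cast; ring

lemma rep_psd (d : ℕ) (W : (Fin d → ℝ) → ℝ) (hW : Integrable W) (h0 : ∀ w, 0 ≤ W w) :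
    IsPSDKernel (fun x y : EuclideanSpace ℝ (Fin d) =>
      ∫ w, (W w : ℂ) * (ph x w * (starRingEnd ℂ) (ph y w))) := by
  intro n x c
  have hi : ∀ j k, Integrable (fun w => c j * (starRingEnd ℂ) (c k) *
      ((W w : ℂ) * (ph (x j) w * (starRingEnd ℂ) (ph (x k) w)))) := by
    intro j k
    refine Integrable.const_mul ?_ _
    refine hW.ofReal.mul_bdd (c := 1) ?_ ?_
    · exact ((ph_cont _).mul (Complex.continuous_conj.comp (ph_cont _))).aestronglyMeasurable
    · exact Eventually.of_forall fun w => by simp [ph_norm]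
  have : ∑ j, ∑ k, c j * (starRingEnd ℂ) (c k) *
      ∫ w, (W w : ℂ) * (ph (x j) w * (starRingEnd ℂ) (ph (x k) w)) =
      ((∫ w, W w * Complex.normSq (∑ j, c j * ph (x j) w) : ℝ) : ℂ) := by
    rw [← integral_complex_ofReal]
    simp_rw [← integral_const_mul]
    have : ∀ j, ∑ k, ∫ w, c j * (starRingEnd ℂ) (c k) *
      ((W w : ℂ) * (ph (x j) w * (starRingEnd ℂ) (ph (x k) w))) = ∫ w, ∑ k, c j * (starRingEnd ℂ) (c k) *
      ((W w : ℂ) * (ph (x j) w * (starRingEnd ℂ) (ph (x k) w))) := fun j =>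
      (integral_finsetSum _ (fun k _ => hi j k)).symm
    simp_rw [this]
    rw [← integral_finsetSum _ (fun j _ => integrable_finsetSum _ fun k _ => hi j k)]
    congr 1; ext w
    rw [Complex.ofReal_mul, ← Complex.mul_conj, map_sum, Finset.sum_mul_sum, Finset.mul_sum]
    refine Finset.sum_congr rfl fun j _ => ?_
    rw [Finset.mul_sum]
    refine Finset.sum_congr rfl fun k _ => ?_
    rw [map_mul]; ring
  rw [this]
  exact Complex.zero_le_real.2 (integral_nonneg fun w => mul_nonneg (h0 w) (Complex.normSq_nonneg _))

lemma W_int (d : ℕ) {a : ℝ} (ha : 0 < a) :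
    Integrable (fun w : Fin d → ℝ => ∏ i, cw a (w i)) :=
  Integrable.fintype_prod (fun _ => cw_integrable ha)

lemma diff_psd (d : ℕ) {σ τ r : ℝ} (hσ : 0 < σ) (hτ : 0 < τ)
    (h : ∀ t, cw τ⁻¹ t ≤ r * cw σ⁻¹ t) :
    IsPSDKernel (fun x y : EuclideanSpace ℝ (Fin d) =>
        ((r ^ d : ℝ) : ℂ) * l1expK d σ x y - l1expK d τ x y) := by
  have hW1 := W_int d (inv_pos.2 hσ)
  have hW2 := W_int d (inv_pos.2 hτ)
  have := rep_psd d (fun w => r ^ d * ∏ i, cw σ⁻¹ (w i) - ∏ i, cw τ⁻¹ (w i))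
    ((hW1.const_mul _).sub hW2) (fun w => by
      have : ∏ i, cw τ⁻¹ (w i) ≤ ∏ i, (r * cw σ⁻¹ (w i)) :=
        Finset.prod_le_prod (fun i _ => cw_nonneg (inv_pos.2 hτ) _) (fun i _ => h _)
      rw [Finset.prod_mul_distrib] at this
      simp at this
      simpa using this)
  convert this using 3 with x y
  have hb : ∀ W : (Fin d → ℝ) → ℝ, Integrable W →
      Integrable (fun w => (W w : ℂ) * (ph x w * (starRingEnd ℂ) (ph y w))) := by
    intro W hW
    refine hW.ofReal.mul_bdd (c := 1) ?_ ?_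
    · exact ((ph_cont _).mul (Complex.continuous_conj.comp (ph_cont _))).aestronglyMeasurable
    · exact Eventually.of_forall fun w => by simp [ph_norm]
  rw [l1_rep d hσ, l1_rep d hτ, ← integral_const_mul, ← integral_sub ((hb _ hW1).const_mul _) (hb _ hW2)]
  congr 1; ext w
  push_cast; ring

lemma cw_le1 {a b : ℝ} (ha : 0 < a) (hab : a ≤ b) (t : ℝ) : cw b t ≤ b / a * cw a t := by
  unfold cw
  have hb : 0 < b := by linarith
  rw [div_mul_div_comm, div_le_div_iff₀ (by positivity) (by positivity)]
  have : a ^ 2 ≤ b ^ 2 := by gcongr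
  nlinarith [mul_nonneg (mul_pos ha hb).le (sub_nonneg.2 this)]

lemma cw_le2 {a b : ℝ} (ha : 0 < a) (hab : a ≤ b) (t : ℝ) : cw a t ≤ b / a * cw b t := by
  unfold cw
  have hb : 0 < b := by linarith
  rw [div_mul_div_comm, div_le_div_iff₀ (by positivity) (by positivity)]
  have : a ^ 2 ≤ b ^ 2 := by gcongr
  nlinarith [mul_nonneg (sq_nonneg (2 * Real.pi * t)) (sub_nonneg.2 this)]

lemma psd_fintype {X ι : Type*} [Fintype ι] {K : X → X → ℂ} (h : IsPSDKernel K)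
    (x : ι → X) (c : ι → ℂ) :
    0 ≤ ∑ j, ∑ k, c j * (starRingEnd ℂ) (c k) * K (x j) (x k) := by
  have e := (Fintype.equivFin ι).symm
  have := h _ (x ∘ e) (c ∘ e)
  rw [← e.sum_comp]
  simp_rw [← e.sum_comp (fun k => c _ * (starRingEnd ℂ) (c k) * K (x _) (x k))]
  exact this

noncomputable def qf {N : ℕ} (p c : Fin N → ℝ) (σ : ℝ) : ℝ :=
  ∑ u, ∑ v, c u * c v * Real.exp (-|p u - p v| / σ)

lemma sum_sum_prod {d N : ℕ} (F : Fin N → Fin N → ℝ) :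
    ∑ f : Fin d → Fin N, ∑ g : Fin d → Fin N, ∏ i, F (f i) (g i) = (∑ u, ∑ v, F u v) ^ d := by
  have h1 : ∀ G : Fin d → Fin N → ℝ, ∑ g : Fin d → Fin N, ∏ i, G i (g i) = ∏ i, ∑ v, G i v := by
    intro G
    rw [Finset.prod_univ_sum, Fintype.piFinset_univ]
  simp_rw [fun f : Fin d → Fin N => h1 (fun i v => F (f i) v)]
  rw [h1 (fun _ u => ∑ v, F u v)]
  simp

lemma lower_qf {d N : ℕ} {σ τ lam : ℝ}
    (h : IsPSDKernel (fun x y : EuclideanSpace ℝ (Fin d) =>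
        (lam : ℂ) * l1expK d σ x y - l1expK d τ x y)) (p c : Fin N → ℝ) :
    qf p c τ ^ d ≤ lam * qf p c σ ^ d := by
  have key := psd_fintype h (fun f : Fin d → Fin N => WithLp.toLp 2 (fun i => p (f i)))
    (fun f => ((∏ i, c (f i) : ℝ) : ℂ))
  have e : ∀ s : ℝ, qf p c s ^ d = ∑ f : Fin d → Fin N, ∑ g : Fin d → Fin N,
      (∏ i, c (f i)) * (∏ i, c (g i)) * Real.exp (-(∑ i, |p (f i) - p (g i)|) / s) := by
    intro s
    rw [qf, ← sum_sum_prod]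
    refine Finset.sum_congr rfl fun f _ => Finset.sum_congr rfl fun g _ => ?_
    rw [Finset.prod_mul_distrib, Finset.prod_mul_distrib, ← Real.exp_sum, ← Finset.sum_div,
      Finset.sum_neg_distrib]
  rw [← sub_nonneg, e, e, Finset.mul_sum, ← Finset.sum_sub_distrib]
  simp_rw [Finset.mul_sum, ← Finset.sum_sub_distrib]
  rw [← Complex.zero_le_real]
  convert key using 1
  push_cast
  refine Finset.sum_congr rfl fun f _ => Finset.sum_congr rfl fun g _ => ?_
  simp only [l1expK, map_prod, Complex.conj_ofReal]
  push_cast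
  ring

lemma one_sub_exp_lim (a : ℝ) :
    Tendsto (fun h : ℝ => (1 - Real.exp (-(a * h))) / h) (𝓝[>] 0) (𝓝 a) := by
  have h1 : HasDerivAt (fun h : ℝ => 1 - Real.exp (-(a * h))) a 0 := by
    have := (((hasDerivAt_id (0:ℝ)).const_mul a).neg.exp).const_sub 1
    simpa using this
  have := h1.tendsto_slope_zero_right
  refine this.congr fun h => ?_
  simp [div_eq_inv_mul]

lemma ratio_lim (a : ℝ) {b : ℝ} (hb : b ≠ 0) :
    Tendsto (fun h : ℝ => (1 - Real.exp (-(a * h))) / (1 - Real.exp (-(b * h))))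
      (𝓝[>] 0) (𝓝 (a / b)) := by
  refine ((one_sub_exp_lim a).div (one_sub_exp_lim b) hb).congr' ?_
  filter_upwards [self_mem_nhdsWithin] with h hh
  have : h ≠ 0 := ne_of_gt hh
  exact div_div_div_cancel_right₀ this _ _

lemma lower_a {d : ℕ} {σ₁ σ₂ lam : ℝ} (h1 : 0 < σ₁) (h2 : 0 < σ₂)
    (h : IsPSDKernel (fun x y : EuclideanSpace ℝ (Fin d) =>
        (lam : ℂ) * l1expK d σ₂ x y - l1expK d σ₁ x y)) : (σ₂ / σ₁) ^ d ≤ lam := by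
  have hl := (ratio_lim σ₁⁻¹ (inv_ne_zero h2.ne')).pow d
  rw [inv_div_inv] at hl
  refine le_of_tendsto hl ?_
  filter_upwards [self_mem_nhdsWithin] with t ht
  have ht : 0 < t := ht
  have key := lower_qf h ![0, t] ![1, -1]
  have hq : ∀ s : ℝ, qf ![0, t] ![1, -1] s = 2 * (1 - Real.exp (-(s⁻¹ * t))) := by
    intro s
    simp [qf, Fin.sum_univ_two, abs_of_pos ht]
    rw [show -t / s = -(s⁻¹ * t) by rw [div_eq_inv_mul]; ring]
    ring
  rw [hq, hq, mul_pow, mul_pow] at key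
  have hp : 0 < 1 - Real.exp (-(σ₂⁻¹ * t)) := by
    rw [sub_pos, Real.exp_lt_one_iff]
    have : 0 < σ₂⁻¹ * t := by positivity
    linarith
  rw [div_pow, div_le_iff₀ (by positivity)]
  have h2d : (0:ℝ) < 2 ^ d := by positivity
  refine le_of_mul_le_mul_left ?_ h2d
  linarith

lemma geo {q : ℝ} (hq : q ≠ 1) (N : ℕ) :
    ∑ u : Fin N, ∑ v : Fin N, q ^ (((u : ℕ) - v) + ((v : ℕ) - u)) =
      N * ((1 + q) / (1 - q)) - 2 * q * (1 - q ^ N) / (1 - q) ^ 2 := by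
  have h1 : 1 - q ≠ 0 := sub_ne_zero.2 hq.symm
  have hs : ∀ N : ℕ, ∑ u : Fin N, q ^ (N - (u : ℕ)) = q * (1 - q ^ N) / (1 - q) := by
    intro N
    induction N with
    | zero => simp
    | succ n ih =>
      rw [Fin.sum_univ_succ]
      simp only [Fin.val_zero, Fin.val_succ, Nat.add_sub_add_right, ih]
      field_simp
      simp
      ring
  induction N with
  | zero => simp
  | succ n ih =>
    have e1 : ∀ u : Fin n, (u : ℕ) - n = 0 := fun u => by omega
    rw [Fin.sum_univ_castSucc]
    simp only [Fin.sum_univ_castSucc, Fin.val_castSucc, Fin.val_last, Finset.sum_add_distrib, ih, e1,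
      zero_add, add_zero, hs]
    simp
    field_simp
    ring

lemma qf_ones {N : ℕ} {s t : ℝ} (ht : 0 < t) :
    qf (fun u : Fin N => (u : ℝ) * t) (fun _ => 1) s =
     ∑ u : Fin N, ∑ v : Fin N, (Real.exp (-(s⁻¹ * t))) ^ (((u : ℕ) - v) + ((v : ℕ) - u)) := by
  unfold qf
  refine Finset.sum_congr rfl fun f _ => Finset.sum_congr rfl fun g _ => ?_
  rw [← Real.exp_nat_mul, one_mul, one_mul]
  congr 1
  have : |(f : ℝ) * t - g * t| = (((f : ℕ) - g + ((g : ℕ) - f) : ℕ) : ℝ) * t := by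
    rw [← sub_mul, abs_mul, abs_of_pos ht]
    congr 1
    rcases le_total (f : ℕ) g with hfg | hfg
    · have hc : (f : ℝ) ≤ g := by exact_mod_cast hfg
      rw [abs_of_nonpos (by linarith), Nat.sub_eq_zero_of_le hfg, zero_add, Nat.cast_sub hfg]; ring
    · have hc : (g : ℝ) ≤ f := by exact_mod_cast hfg
      rw [abs_of_nonneg (by linarith), Nat.sub_eq_zero_of_le hfg, add_zero, Nat.cast_sub hfg]
  rw [this, div_eq_inv_mul]; ring

lemma qf_lim {s t : ℝ} (hs : 0 < s) (ht : 0 < t) :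
    Tendsto (fun N : ℕ => qf (fun u : Fin N => (u : ℝ) * t) (fun _ => 1) s / N) atTop
      (𝓝 ((1 + Real.exp (-(s⁻¹ * t))) / (1 - Real.exp (-(s⁻¹ * t))))) := by
  have hq1 : Real.exp (-(s⁻¹ * t)) < 1 := by
    rw [Real.exp_lt_one_iff]
    have : 0 < s⁻¹ * t := by positivity
    linarith
  have hq0 := Real.exp_pos (-(s⁻¹ * t))
  simp_rw [qf_ones ht, geo hq1.ne]
  set q := Real.exp (-(s⁻¹ * t))
  have h1 : Tendsto (fun N : ℕ => (1 + q) / (1 - q) -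
      (2 * q * (1 - q ^ N) / (1 - q) ^ 2) * ((N : ℝ)⁻¹)) atTop (𝓝 ((1 + q) / (1 - q) -
      (2 * q * (1 - 0) / (1 - q) ^ 2) * 0)) :=
    tendsto_const_nhds.sub ((((tendsto_const_nhds.sub
      (tendsto_pow_atTop_nhds_zero_of_lt_one hq0.le hq1)).const_mul _).div_const _).mul
        tendsto_inv_atTop_nhds_zero_nat)
  rw [mul_zero, sub_zero] at h1
  refine h1.congr' ?_
  filter_upwards [eventually_gt_atTop 0] with N hN
  have : (N : ℝ) ≠ 0 := by positivity
  rw [sub_div, mul_div_cancel_left₀ _ this, div_eq_mul_inv _ (N : ℝ)]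

lemma lower_b {d : ℕ} {σ₁ σ₂ lam : ℝ} (h1 : 0 < σ₁) (h2 : 0 < σ₂)
    (h : IsPSDKernel (fun x y : EuclideanSpace ℝ (Fin d) =>
        (lam : ℂ) * l1expK d σ₁ x y - l1expK d σ₂ x y)) : (σ₂ / σ₁) ^ d ≤ lam := by
  have key : ∀ t : ℝ, 0 < t →
      ((1 + Real.exp (-(σ₂⁻¹ * t))) / (1 - Real.exp (-(σ₂⁻¹ * t)))) ^ d ≤
      lam * ((1 + Real.exp (-(σ₁⁻¹ * t))) / (1 - Real.exp (-(σ₁⁻¹ * t)))) ^ d := by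
    intro t ht
    refine le_of_tendsto_of_tendsto ((qf_lim h2 ht).pow d) (((qf_lim h1 ht).pow d).const_mul lam) ?_
    filter_upwards [eventually_gt_atTop 0] with N hN
    have hN' : (0:ℝ) < (N:ℝ) ^ d := by positivity
    have := lower_qf h (fun u : Fin N => (u : ℝ) * t) (fun _ => 1)
    rw [div_pow, div_pow, ← mul_div_assoc]
    gcongr
  have hc : ∀ a : ℝ, Tendsto (fun t : ℝ => 1 + Real.exp (-(a * t))) (𝓝[>] 0) (𝓝 2) := by
    intro a
    have : Continuous (fun t : ℝ => 1 + Real.exp (-(a * t))) := by fun_prop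
    have := (this.tendsto 0).mono_left (nhdsWithin_le_nhds (s := Set.Ioi 0))
    simpa [one_add_one_eq_two] using this
  have hl := ((ratio_lim σ₁⁻¹ (inv_ne_zero h2.ne')).mul
    ((hc σ₂⁻¹).div (hc σ₁⁻¹) two_ne_zero)).pow d
  rw [inv_div_inv, div_self two_ne_zero, mul_one] at hl
  refine le_of_tendsto hl ?_
  filter_upwards [self_mem_nhdsWithin] with t ht
  have ht : 0 < t := ht
  have hp : ∀ s : ℝ, 0 < s → 0 < 1 - Real.exp (-(s⁻¹ * t)) := by
    intro s hs
    rw [sub_pos, Real.exp_lt_one_iff]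
    have : 0 < s⁻¹ * t := by positivity
    linarith
  have p1 := hp _ h1
  have p2 := hp _ h2
  have e1 := Real.exp_pos (-(σ₁⁻¹ * t))
  have k := key t ht
  rw [← div_le_iff₀ (by positivity), ← div_pow] at k
  refine le_trans (le_of_eq ?_) k
  congr 1
  simp only [Pi.div_apply]
  field_simp

/-- For `0 < σ₁ < σ₂`: `(σ₂/σ₁)^d` is the least `λ ≥ 0` making `λE_{σ₂} − E_{σ₁}`
positive semidefinite, and also the least `λ ≥ 0` making `λE_{σ₁} − E_{σ₂}`
positive semidefinite (in particular both differences with this constant are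
positive semidefinite kernels). -/
theorem l1exp_inclusion (d : ℕ) (σ₁ σ₂ : ℝ) (hσ₁ : 0 < σ₁) (h₁₂ : σ₁ < σ₂) :
    (IsPSDKernel (fun x y : EuclideanSpace ℝ (Fin d) =>
        (((σ₂ / σ₁) ^ d : ℝ) : ℂ) * l1expK d σ₂ x y - l1expK d σ₁ x y) ∧
      IsLeast {lam : ℝ | 0 ≤ lam ∧
          IsPSDKernel (fun x y : EuclideanSpace ℝ (Fin d) =>
            (lam : ℂ) * l1expK d σ₂ x y - l1expK d σ₁ x y)}
        ((σ₂ / σ₁) ^ d)) ∧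
    (IsPSDKernel (fun x y : EuclideanSpace ℝ (Fin d) =>
        (((σ₂ / σ₁) ^ d : ℝ) : ℂ) * l1expK d σ₁ x y - l1expK d σ₂ x y) ∧
      IsLeast {lam : ℝ | 0 ≤ lam ∧
          IsPSDKernel (fun x y : EuclideanSpace ℝ (Fin d) =>
            (lam : ℂ) * l1expK d σ₁ x y - l1expK d σ₂ x y)}
        ((σ₂ / σ₁) ^ d)) := by
  have h2 : 0 < σ₂ := hσ₁.trans h₁₂
  have hi : σ₂⁻¹ ≤ σ₁⁻¹ := (inv_lt_inv₀ h2 hσ₁).2 h₁₂ |>.le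
  have hr : σ₁⁻¹ / σ₂⁻¹ = σ₂ / σ₁ := inv_div_inv _ _
  have A := diff_psd d (r := σ₂ / σ₁) h2 hσ₁ (by rw [← hr]; exact cw_le1 (inv_pos.2 h2) hi)
  have B := diff_psd d (r := σ₂ / σ₁) hσ₁ h2 (by rw [← hr]; exact cw_le2 (inv_pos.2 h2) hi)
  have h0 : 0 ≤ (σ₂ / σ₁) ^ d := by positivity
  exact ⟨⟨A, ⟨h0, A⟩, fun lam hl => lower_a hσ₁ h2 hl.2⟩,
    ⟨B, ⟨h0, B⟩, fun lam hl => lower_b hσ₁ h2 hl.2⟩⟩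
end

section
/- Let M_β(x,y) = (1 + ‖x−y‖²)^{−β} be the inverse multiquadric kernel on ℝ^d with parameter β > 0, where ‖·‖ is the Euclidean norm. For distinct positive constants β₁ ≠ β₂, there exists λ ≥ 0 such that λM_{β₂} − M_{β₁} is a positive semidefinite kernel on ℝ^d if and only if d/2 < β₁ < β₂. -/
open scoped ComplexOrder

/-- The inverse multiquadric kernel `M_β(x,y) = (1 + ‖x−y‖²)^{−β}` on `ℝ^d`. -/
noncomputable def invMultiquadricK (d : ℕ) (β : ℝ) (x y : EuclideanSpace ℝ (Fin d)) : ℂ :=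
  (((1 + ‖x - y‖ ^ 2) ^ (-β) : ℝ) : ℂ)


lemma psd_of_real {X : Type*} (K : X → X → ℝ) (hs : ∀ x y, K x y = K y x)
    (h : ∀ (n : ℕ) (x : Fin n → X) (c : Fin n → ℝ), 0 ≤ ∑ j, ∑ k, c j * c k * K (x j) (x k)) :
    IsPSDKernel (fun x y => (K x y : ℂ)) := by
  intro n x c
  rw [Complex.le_def]
  have h1 := h n x (fun j => (c j).re)
  have h2 := h n x (fun j => (c j).im)
  constructor
  · simp only [Complex.re_sum, Complex.zero_re]
    have h3 := add_nonneg h1 h2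
    rw [← Finset.sum_add_distrib] at h3
    refine h3.trans_eq (Finset.sum_congr rfl fun j _ => ?_)
    rw [← Finset.sum_add_distrib]
    refine Finset.sum_congr rfl fun k _ => ?_
    simp
    ring
  · simp only [Complex.im_sum, Complex.zero_im]
    have e : ∀ j k, (c j * (starRingEnd ℂ) (c k) * (K (x j) (x k) : ℂ)).im
        = (c j).im * (c k).re * K (x j) (x k) - (c j).re * (c k).im * K (x j) (x k) := by
      intro j k
      simp
      ring
    simp only [e, Finset.sum_sub_distrib]
    rw [eq_comm, sub_eq_zero, Finset.sum_comm]
    refine Finset.sum_congr rfl fun j _ => Finset.sum_congr rfl fun k _ => ?_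
    rw [hs (x k) (x j)]
    ring

/-- the real quadratic form extracted from the hypothesis -/
lemma real_of_psd {d : ℕ} {β₁ β₂ lam : ℝ}
    (h : IsPSDKernel (fun x y : EuclideanSpace ℝ (Fin d) =>
          (lam : ℂ) * invMultiquadricK d β₂ x y - invMultiquadricK d β₁ x y))
    {ι : Type*} [Fintype ι] (x : ι → EuclideanSpace ℝ (Fin d)) (c : ι → ℝ) :
    ∑ j, ∑ k, c j * c k * (1 + ‖x j - x k‖ ^ 2) ^ (-β₁) ≤
      lam * ∑ j, ∑ k, c j * c k * (1 + ‖x j - x k‖ ^ 2) ^ (-β₂) := by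
  let e := (Fintype.equivFin ι).symm
  have h1 := h _ (fun i => x (e i)) (fun i => (c (e i) : ℂ))
  have h2 : 0 ≤ ∑ j, ∑ k, c (e j) * c (e k) * (lam * (1 + ‖x (e j) - x (e k)‖ ^ 2) ^ (-β₂)
      - (1 + ‖x (e j) - x (e k)‖ ^ 2) ^ (-β₁)) := by
    simp only [invMultiquadricK, Complex.conj_ofReal] at h1
    exact_mod_cast h1
  have h3 : ∑ j, ∑ k, c (e j) * c (e k) * (lam * (1 + ‖x (e j) - x (e k)‖ ^ 2) ^ (-β₂)
      - (1 + ‖x (e j) - x (e k)‖ ^ 2) ^ (-β₁)) = ∑ j, ∑ k, c j * c k * (lam * (1 + ‖x j - x k‖ ^ 2) ^ (-β₂)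
      - (1 + ‖x j - x k‖ ^ 2) ^ (-β₁)) := by
    rw [← e.sum_comp]
    refine Finset.sum_congr rfl fun j _ => ?_
    rw [← e.sum_comp]
  rw [h3] at h2
  rw [← sub_nonneg]
  refine h2.trans_eq ?_
  rw [Finset.mul_sum, ← Finset.sum_sub_distrib]
  refine Finset.sum_congr rfl fun j _ => ?_
  rw [Finset.mul_sum, ← Finset.sum_sub_distrib]
  refine Finset.sum_congr rfl fun k _ => ?_
  ring

lemma gauss_form {d : ℕ} {n : ℕ} (x : Fin n → EuclideanSpace ℝ (Fin d)) (c : Fin n → ℝ)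
    {t : ℝ} (ht : 0 < t) :
    MeasureTheory.Integrable (fun v : EuclideanSpace ℝ (Fin d) =>
      Real.exp (-(‖v‖ ^ 2 / (4 * t))) *
        ‖∑ j, (c j : ℂ) * Complex.exp (Complex.I * (inner ℝ (x j) v : ℝ))‖ ^ 2) ∧
    ∫ v : EuclideanSpace ℝ (Fin d), Real.exp (-(‖v‖ ^ 2 / (4 * t))) *
        ‖∑ j, (c j : ℂ) * Complex.exp (Complex.I * (inner ℝ (x j) v : ℝ))‖ ^ 2
     = (4 * Real.pi) ^ ((d : ℝ) / 2) * ∑ j, ∑ k, c j * c k *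
        (t ^ ((d : ℝ) / 2) * Real.exp (-(t * ‖x j - x k‖ ^ 2))) := by
  have hb : 0 < ((1 / (4 * t) : ℝ) : ℂ).re := by rw [Complex.ofReal_re]; positivity
  have key : ∀ v : EuclideanSpace ℝ (Fin d), ((Real.exp (-(‖v‖ ^ 2 / (4 * t))) *
        ‖∑ j, (c j : ℂ) * Complex.exp (Complex.I * (inner ℝ (x j) v : ℝ))‖ ^ 2 : ℝ) : ℂ)
      = ∑ j, ∑ k, ((c j * c k : ℝ) : ℂ) *
        Complex.exp (-((1 / (4 * t) : ℝ) : ℂ) * ‖v‖ ^ 2 + Complex.I * (inner ℝ (x j - x k) v : ℝ)) := by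
    intro v
    rw [Complex.ofReal_mul, Complex.ofReal_pow, ← Complex.mul_conj', map_sum, Finset.sum_mul_sum,
      Finset.mul_sum]
    refine Finset.sum_congr rfl fun j _ => ?_
    rw [Finset.mul_sum]
    refine Finset.sum_congr rfl fun k _ => ?_
    rw [map_mul, ← Complex.exp_conj, map_mul, Complex.conj_I, Complex.conj_ofReal,
      Complex.conj_ofReal, inner_sub_left, Complex.exp_add]
    have : Complex.exp (Complex.I * ((inner ℝ (x j) v - inner ℝ (x k) v : ℝ) : ℂ)) =
      Complex.exp (Complex.I * (inner ℝ (x j) v : ℝ)) * Complex.exp (-Complex.I * (inner ℝ (x k) v : ℝ)) := by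
      rw [← Complex.exp_add]; congr 1; push_cast; ring
    rw [this]
    have e2 : ((Real.exp (-(‖v‖ ^ 2 / (4 * t))) : ℝ) : ℂ) =
        Complex.exp (-((1 / (4 * t) : ℝ) : ℂ) * ‖v‖ ^ 2) := by
      rw [Complex.ofReal_exp]; congr 1; push_cast; ring
    rw [e2]
    push_cast
    ring
  have hint : ∀ j k, MeasureTheory.Integrable (fun v : EuclideanSpace ℝ (Fin d) =>
      ((c j * c k : ℝ) : ℂ) *
        Complex.exp (-((1 / (4 * t) : ℝ) : ℂ) * ‖v‖ ^ 2 + Complex.I * (inner ℝ (x j - x k) v : ℝ))) :=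
    fun j k => (GaussianFourier.integrable_cexp_neg_mul_sq_norm_add hb Complex.I (x j - x k)).const_mul _
  constructor
  · have := MeasureTheory.integrable_finsetSum Finset.univ (fun j _ =>
      MeasureTheory.integrable_finsetSum Finset.univ (fun k _ => hint j k))
    have h2 := this.re
    refine h2.congr (Filter.Eventually.of_forall fun v => ?_)
    show RCLike.re _ = _
    have := congrArg Complex.re (key v)
    rw [Complex.ofReal_re] at this
    exact this.symm
  · rw [← Complex.ofReal_inj, ← integral_complex_ofReal]
    simp_rw [key]
    rw [MeasureTheory.integral_finsetSum _ (fun j _ =>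
      MeasureTheory.integrable_finsetSum Finset.univ (fun k _ => hint j k)), Finset.mul_sum,
      Complex.ofReal_sum]
    refine Finset.sum_congr rfl fun j _ => ?_
    rw [MeasureTheory.integral_finsetSum _ (fun k _ => hint j k), Finset.mul_sum, Complex.ofReal_sum]
    refine Finset.sum_congr rfl fun k _ => ?_
    rw [MeasureTheory.integral_const_mul, GaussianFourier.integral_cexp_neg_mul_sq_norm_add hb]
    have e1 : ((Real.pi : ℂ) / ((1 / (4 * t) : ℝ) : ℂ)) ^ ((Module.finrank ℝ (EuclideanSpace ℝ (Fin d)) : ℂ) / 2)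
       = (((4 * Real.pi) ^ ((d : ℝ) / 2) * t ^ ((d : ℝ) / 2) : ℝ) : ℂ) := by
      rw [← Real.mul_rpow (by positivity) ht.le, Complex.ofReal_cpow (by positivity)]
      simp only [finrank_euclideanSpace, Fintype.card_fin]
      have : (t : ℂ) ≠ 0 := by exact_mod_cast ht.ne'
      congr 1
      · push_cast; field_simp
      · push_cast; rfl
    have e2 : Complex.exp (Complex.I ^ 2 * (‖x j - x k‖ : ℂ) ^ 2 / (4 * ((1 / (4 * t) : ℝ) : ℂ))) =
        ((Real.exp (-(t * ‖x j - x k‖ ^ 2)) : ℝ) : ℂ) := by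
      rw [Complex.ofReal_exp]
      have : (t : ℂ) ≠ 0 := by exact_mod_cast ht.ne'
      congr 1
      rw [Complex.I_sq]
      push_cast
      field_simp
    rw [e1, e2]
    push_cast
    ring

lemma gauss_mono {d : ℕ} {n : ℕ} (x : Fin n → EuclideanSpace ℝ (Fin d)) (c : Fin n → ℝ)
    {u t : ℝ} (hu : 0 < u) (hut : u ≤ t) :
    ∑ j, ∑ k, c j * c k * (u ^ ((d : ℝ) / 2) * Real.exp (-(u * ‖x j - x k‖ ^ 2))) ≤
    ∑ j, ∑ k, c j * c k * (t ^ ((d : ℝ) / 2) * Real.exp (-(t * ‖x j - x k‖ ^ 2))) := by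
  have ht : 0 < t := hu.trans_le hut
  have h1 := gauss_form x c hu
  have h2 := gauss_form x c ht
  have h3 := MeasureTheory.integral_mono h1.1 h2.1 (fun v => by
    dsimp only
    gcongr)
  rw [h1.2, h2.2] at h3
  exact le_of_mul_le_mul_left h3 (by positivity)

lemma gamma_int {a r : ℝ} (ha : 0 < a) (hr : 0 < r) :
    MeasureTheory.IntegrableOn (fun t : ℝ => t ^ (a - 1) * Real.exp (-(r * t))) (Set.Ioi 0) := by
  refine .of_integral_ne_zero ?_
  rw [Real.integral_rpow_mul_exp_neg_mul_Ioi ha hr]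
  have := Real.Gamma_pos_of_pos ha
  positivity

lemma form_int {d : ℕ} {n : ℕ} (x : Fin n → EuclideanSpace ℝ (Fin d)) (c : Fin n → ℝ)
    {a : ℝ} (ha : 0 < a) :
    MeasureTheory.IntegrableOn (fun t : ℝ => t ^ (a - 1) * Real.exp (-t) *
      ∑ j, ∑ k, c j * c k * (t ^ ((d : ℝ) / 2) * Real.exp (-(t * ‖x j - x k‖ ^ 2)))) (Set.Ioi 0) ∧
    ∫ t in Set.Ioi (0 : ℝ), t ^ (a - 1) * Real.exp (-t) *
      ∑ j, ∑ k, c j * c k * (t ^ ((d : ℝ) / 2) * Real.exp (-(t * ‖x j - x k‖ ^ 2)))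
    = Real.Gamma (a + d / 2) * ∑ j, ∑ k, c j * c k * (1 + ‖x j - x k‖ ^ 2) ^ (-(a + d / 2)) := by
  have key : Set.EqOn (fun t : ℝ => t ^ (a - 1) * Real.exp (-t) *
      ∑ j, ∑ k, c j * c k * (t ^ ((d : ℝ) / 2) * Real.exp (-(t * ‖x j - x k‖ ^ 2))))
      (fun t : ℝ => ∑ j, ∑ k, c j * c k *
        (t ^ (a + d / 2 - 1) * Real.exp (-((1 + ‖x j - x k‖ ^ 2) * t)))) (Set.Ioi 0) := by
    intro t ht
    have ht' : 0 < t := ht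
    dsimp only
    rw [Finset.mul_sum]
    refine Finset.sum_congr rfl fun j _ => ?_
    rw [Finset.mul_sum]
    refine Finset.sum_congr rfl fun k _ => ?_
    have e1 : t ^ (a + d / 2 - 1) = t ^ (a - 1) * t ^ ((d : ℝ) / 2) := by
      rw [← Real.rpow_add ht']; congr 1; ring
    have e2 : Real.exp (-((1 + ‖x j - x k‖ ^ 2) * t)) =
        Real.exp (-t) * Real.exp (-(t * ‖x j - x k‖ ^ 2)) := by
      rw [← Real.exp_add]; congr 1; ring
    rw [e1, e2]
    ring
  have ha' : 0 < a + d / 2 := by positivity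
  have hint : ∀ j k, MeasureTheory.IntegrableOn (fun t : ℝ => c j * c k *
        (t ^ (a + d / 2 - 1) * Real.exp (-((1 + ‖x j - x k‖ ^ 2) * t)))) (Set.Ioi 0) :=
    fun j k => (gamma_int ha' (by positivity)).const_mul _
  constructor
  · rw [MeasureTheory.integrableOn_congr_fun key measurableSet_Ioi]
    exact MeasureTheory.integrable_finsetSum Finset.univ (fun j _ =>
      MeasureTheory.integrable_finsetSum Finset.univ (fun k _ => hint j k))
  · rw [MeasureTheory.setIntegral_congr_fun measurableSet_Ioi key,
      MeasureTheory.integral_finsetSum _ (fun j _ =>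
      MeasureTheory.integrable_finsetSum Finset.univ (fun k _ => hint j k)), Finset.mul_sum]
    refine Finset.sum_congr rfl fun j _ => ?_
    rw [MeasureTheory.integral_finsetSum _ (fun k _ => hint j k), Finset.mul_sum]
    refine Finset.sum_congr rfl fun k _ => ?_
    rw [MeasureTheory.integral_const_mul, Real.integral_rpow_mul_exp_neg_mul_Ioi ha' (by positivity),
      one_div, Real.inv_rpow (by positivity), ← Real.rpow_neg (by positivity)]
    ring

lemma suff (d : ℕ) (β₁ β₂ : ℝ) (h1 : (d : ℝ) / 2 < β₁) (h2 : β₁ < β₂) :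
    ∃ lam : ℝ, 0 ≤ lam ∧
        IsPSDKernel (fun x y : EuclideanSpace ℝ (Fin d) =>
          (lam : ℂ) * invMultiquadricK d β₂ x y - invMultiquadricK d β₁ x y) := by
  obtain ⟨a, rfl⟩ : ∃ a, β₁ = a + d / 2 := ⟨β₁ - d / 2, by ring⟩
  obtain ⟨b, rfl⟩ : ∃ b, β₂ = b + d / 2 := ⟨β₂ - d / 2, by ring⟩
  have ha : 0 < a := by linarith
  have hab : a < b := by linarith
  have hb : 0 < b := ha.trans hab
  have d0 : (0 : ℝ) ≤ d / 2 := by positivity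
  have ga := Real.Gamma_pos_of_pos ha
  have gb := Real.Gamma_pos_of_pos hb
  have ga' := Real.Gamma_pos_of_pos (show 0 < a + d / 2 by linarith)
  have gb' := Real.Gamma_pos_of_pos (show 0 < b + d / 2 by linarith)
  set C := Real.Gamma a / Real.Gamma b with hC
  have hCpos : 0 < C := by positivity
  refine ⟨C * Real.Gamma (b + d / 2) / Real.Gamma (a + d / 2), by positivity, ?_⟩
  have := psd_of_real (fun x y : EuclideanSpace ℝ (Fin d) =>
    C * Real.Gamma (b + d / 2) / Real.Gamma (a + d / 2) * (1 + ‖x - y‖ ^ 2) ^ (-(b + d / 2 : ℝ))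
      - (1 + ‖x - y‖ ^ 2) ^ (-(a + d / 2 : ℝ))) (fun x y => by
        rw [norm_sub_rev]) ?_
  · simpa [invMultiquadricK] using this
  intro n x c
  set Q : ℝ → ℝ := fun t => ∑ j, ∑ k, c j * c k *
    (t ^ ((d : ℝ) / 2) * Real.exp (-(t * ‖x j - x k‖ ^ 2))) with hQ
  obtain ⟨ia, ea⟩ := form_int x c ha
  obtain ⟨ib, eb⟩ := form_int x c hb
  have fa : MeasureTheory.IntegrableOn (fun t : ℝ => t ^ (a - 1) * Real.exp (-t)) (Set.Ioi 0) := by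
    simpa using gamma_int ha one_pos
  have fb : MeasureTheory.IntegrableOn (fun t : ℝ => t ^ (b - 1) * Real.exp (-t)) (Set.Ioi 0) := by
    simpa using gamma_int hb one_pos
  have va : ∫ t in Set.Ioi (0 : ℝ), t ^ (a - 1) * Real.exp (-t) = Real.Gamma a := by
    simpa using Real.integral_rpow_mul_exp_neg_mul_Ioi ha one_pos
  have vb : ∫ t in Set.Ioi (0 : ℝ), t ^ (b - 1) * Real.exp (-t) = Real.Gamma b := by
    simpa using Real.integral_rpow_mul_exp_neg_mul_Ioi hb one_pos
  -- threshold
  set τ : ℝ := (1 / C) ^ (1 / (b - a)) with hτ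
  have τpos : 0 < τ := by positivity
  have hτC : C * τ ^ (b - a) = 1 := by
    rw [hτ, ← Real.rpow_mul (by positivity), one_div_mul_cancel (by linarith), Real.rpow_one]
    field_simp
  have hnn : 0 ≤ ∫ t in Set.Ioi (0 : ℝ), ((C * (t ^ (b - 1) * Real.exp (-t) * Q t)
      - t ^ (a - 1) * Real.exp (-t) * Q t)
      - (C * (t ^ (b - 1) * Real.exp (-t)) - t ^ (a - 1) * Real.exp (-t)) * Q τ) := by
    refine MeasureTheory.setIntegral_nonneg measurableSet_Ioi fun t ht => ?_
    have ht' : 0 < t := ht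
    have e1 : t ^ (b - 1) = t ^ (a - 1) * t ^ (b - a) := by
      rw [← Real.rpow_add ht']; congr 1; ring
    have e2 : (C * (t ^ (b - 1) * Real.exp (-t) * Q t)
      - t ^ (a - 1) * Real.exp (-t) * Q t)
      - (C * (t ^ (b - 1) * Real.exp (-t)) - t ^ (a - 1) * Real.exp (-t)) * Q τ
      = t ^ (a - 1) * Real.exp (-t) * ((C * t ^ (b - a) - 1) * (Q t - Q τ)) := by
      rw [e1]; ring
    rw [e2]
    refine mul_nonneg (by positivity) ?_
    rcases le_total t τ with h | h
    · have q := gauss_mono x c ht' h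
      have p : t ^ (b - a) ≤ τ ^ (b - a) := Real.rpow_le_rpow ht'.le h (by linarith)
      have p2 := mul_le_mul_of_nonneg_left p hCpos.le
      exact mul_nonneg_of_nonpos_of_nonpos (by linarith) (sub_nonpos.2 q)
    · have q := gauss_mono x c τpos h
      have p : τ ^ (b - a) ≤ t ^ (b - a) := Real.rpow_le_rpow τpos.le h (by linarith)
      have p2 := mul_le_mul_of_nonneg_left p hCpos.le
      exact mul_nonneg (by linarith) (sub_nonneg.2 q)
  have ib' : MeasureTheory.IntegrableOn (fun t : ℝ => C * (t ^ (b - 1) * Real.exp (-t) * Q t)) (Set.Ioi 0) :=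
    ib.const_mul C
  have ia' : MeasureTheory.IntegrableOn (fun t : ℝ => t ^ (a - 1) * Real.exp (-t) * Q t) (Set.Ioi 0) := ia
  have i1 : MeasureTheory.IntegrableOn (fun t : ℝ => C * (t ^ (b - 1) * Real.exp (-t) * Q t)
      - t ^ (a - 1) * Real.exp (-t) * Q t) (Set.Ioi 0) := ib'.sub ia'
  have i2 : MeasureTheory.IntegrableOn (fun t : ℝ => (C * (t ^ (b - 1) * Real.exp (-t))
      - t ^ (a - 1) * Real.exp (-t)) * Q τ) (Set.Ioi 0) := ((fb.const_mul C).sub fa).mul_const _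
  rw [MeasureTheory.integral_sub i1 i2,
    MeasureTheory.integral_sub ib' ia', MeasureTheory.integral_mul_const,
    MeasureTheory.integral_sub (fb.const_mul C) fa, MeasureTheory.integral_const_mul,
    MeasureTheory.integral_const_mul, va, vb, ea, eb] at hnn
  have z : C * Real.Gamma b - Real.Gamma a = 0 := by rw [hC]; field_simp; ring
  rw [z, zero_mul, sub_zero] at hnn
  have h3 := div_nonneg hnn ga'.le
  refine h3.trans_eq ?_
  rw [sub_div, mul_div_cancel_left₀ _ ga'.ne', ← mul_assoc, mul_div_right_comm,
    Finset.mul_sum, ← Finset.sum_sub_distrib]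
  refine Finset.sum_congr rfl fun j _ => ?_
  rw [Finset.mul_sum, ← Finset.sum_sub_distrib]
  refine Finset.sum_congr rfl fun k _ => ?_
  ring

lemma choose_neg_prod (β : ℝ) (n : ℕ) :
    Ring.choose (-β) n * (-1) ^ n * (n.factorial : ℝ) = ∏ i ∈ Finset.range n, (β + i) := by
  rw [Ring.choose_eq_smul]
  have h : (descPochhammer ℤ n).smeval (-β) = ∏ j ∈ Finset.range n, (-β - j) := by
    rw [← descPochhammer_eval_eq_prod_range, Polynomial.eval_eq_smeval]
    rw [← descPochhammer_map (Int.castRingHom ℝ), ← Polynomial.eval_eq_smeval, Polynomial.eval_map,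
      ← Polynomial.eval₂_smulOneHom_eq_smeval]
    congr 1
    exact RingHom.ext_int _ _
  rw [h]
  have h2 : ∏ j ∈ Finset.range n, (-β - (j : ℝ)) = (-1) ^ n * ∏ i ∈ Finset.range n, (β + i) := by
    have h5 : ((-1 : ℝ)) ^ n = ∏ _i ∈ Finset.range n, (-1 : ℝ) := by simp
    rw [h5, ← Finset.prod_mul_distrib]
    refine Finset.prod_congr rfl fun i _ => by ring
  rw [h2, smul_eq_mul]
  have h3 : (n.factorial : ℝ) ≠ 0 := by exact_mod_cast n.factorial_ne_zero
  have h4 : ((-1 : ℝ) ^ n) * (-1) ^ n = 1 := by rw [← mul_pow]; simp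
  field_simp
  rw [sq, h4, one_mul]

/-- binomial weights -/
noncomputable def wt (n j : ℕ) : ℝ := (-1) ^ (n - j) * (n.choose j : ℝ)

lemma wt_pow_lt {n i : ℕ} (h : i < n) : ∑ j ∈ Finset.range (n + 1), wt n j * (j : ℝ) ^ i = 0 := by
  have h1 := congrFun (fwdDiff_iter_pow_eq_zero_of_lt (R := ℝ) h) 0
  rw [fwdDiff_iter_eq_sum_shift] at h1
  simpa [wt] using h1

lemma wt_pow_eq (n : ℕ) : ∑ j ∈ Finset.range (n + 1), wt n j * (j : ℝ) ^ n = n.factorial := by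
  have h1 := congrFun (fwdDiff_iter_eq_factorial (R := ℝ) (n := n)) 0
  rw [fwdDiff_iter_eq_sum_shift] at h1
  simpa [wt] using h1

lemma mom (n m : ℕ) : ∑ j ∈ Finset.range (n + 1), ∑ k ∈ Finset.range (n + 1),
    wt n j * wt n k * (((j : ℝ) - k) ^ 2) ^ m =
    ∑ i ∈ Finset.range (2 * m + 1), ((2 * m).choose i : ℝ) * (-1) ^ (2 * m - i) *
      ((∑ j ∈ Finset.range (n + 1), wt n j * (j : ℝ) ^ i) *
       ∑ k ∈ Finset.range (n + 1), wt n k * (k : ℝ) ^ (2 * m - i)) := by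
  simp_rw [Finset.sum_mul_sum, Finset.mul_sum]
  rw [Finset.sum_comm]
  simp_rw [Finset.sum_comm (s := Finset.range (2 * m + 1))]
  rw [Finset.sum_comm]
  refine Finset.sum_congr rfl fun j _ => Finset.sum_congr rfl fun k _ => ?_
  rw [← pow_mul, sub_eq_add_neg, add_pow, Finset.mul_sum]
  refine Finset.sum_congr rfl fun i _ => ?_
  rw [neg_pow (k : ℝ)]
  ring

lemma mom_lt {n m : ℕ} (h : m < n) : ∑ j ∈ Finset.range (n + 1), ∑ k ∈ Finset.range (n + 1),
    wt n j * wt n k * (((j : ℝ) - k) ^ 2) ^ m = 0 := by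
  rw [mom]
  refine Finset.sum_eq_zero fun i hi => ?_
  rcases lt_or_ge i n with h1 | h1
  · rw [wt_pow_lt h1]; ring
  · rw [wt_pow_lt (show 2 * m - i < n by omega)]; ring

lemma mom_eq (n : ℕ) : ∑ j ∈ Finset.range (n + 1), ∑ k ∈ Finset.range (n + 1),
    wt n j * wt n k * (((j : ℝ) - k) ^ 2) ^ n =
      (-1) ^ n * (((2 * n).choose n : ℝ) * (n.factorial : ℝ) ^ 2) := by
  rw [mom, Finset.sum_eq_single n]
  · rw [show 2 * n - n = n by omega, wt_pow_eq]; ring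
  · intro i hi hne
    rw [Finset.mem_range] at hi
    rcases lt_or_ge i n with h1 | h1
    · rw [wt_pow_lt h1]; ring
    · rw [wt_pow_lt (show 2 * n - i < n by omega)]; ring
  · intro h; exact absurd (Finset.mem_range.2 (by omega)) h

open Filter Topology Asymptotics in
lemma taylor_rem (β : ℝ) (n : ℕ) (s : ℝ) :
    Tendsto (fun v : ℝ => ((1 + v * s) ^ (-β) -
      ∑ m ∈ Finset.range (n + 1), Ring.choose (-β) m * (v * s) ^ m) / v ^ n) (𝓝[>] 0) (𝓝 0) := by
  have h1 := (Real.one_add_rpow_hasFPowerSeriesAt_zero (a := -β)).isBigO_sub_partialSum_pow (n + 1)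
  have h2 : Tendsto (fun v : ℝ => v * s) (𝓝[>] 0) (𝓝 0) := by
    have : Tendsto (fun v : ℝ => v * s) (𝓝 0) (𝓝 (0 * s)) := (continuous_mul_const s).tendsto 0
    rw [zero_mul] at this
    exact this.mono_left nhdsWithin_le_nhds
  have h3 := h1.comp_tendsto h2
  have h4 : (fun v : ℝ => (1 + v * s) ^ (-β) -
      ∑ m ∈ Finset.range (n + 1), Ring.choose (-β) m * (v * s) ^ m) =O[𝓝[>] 0]
      (fun v : ℝ => ‖v * s‖ ^ (n + 1)) := by
    refine h3.congr_left fun v => ?_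
    simp only [FormalMultilinearSeries.partialSum, binomialSeries_apply, List.ofFn_const,
      List.prod_replicate, smul_eq_mul, Function.comp, zero_add]
  have h5 : (fun v : ℝ => ‖v * s‖ ^ (n + 1)) =o[𝓝[>] 0] (fun v : ℝ => v ^ n) := by
    have h6 : (fun v : ℝ => v ^ (n + 1)) =o[𝓝[>] 0] (fun v : ℝ => v ^ n) :=
      (isLittleO_pow_pow (𝕜 := ℝ) (Nat.lt_succ_self n)).mono nhdsWithin_le_nhds
    have h7 := (h6.const_mul_left (s ^ (n + 1))).norm_left
    refine h7.congr_left fun v => ?_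
    rw [← norm_pow]
    congr 1; ring
  exact (h4.trans_isLittleO h5).tendsto_div_nhds_zero

open Filter Topology in
lemma form_lim (β : ℝ) (n : ℕ) :
    Tendsto (fun v : ℝ => (∑ j ∈ Finset.range (n + 1), ∑ k ∈ Finset.range (n + 1),
      wt n j * wt n k * (1 + v * ((j : ℝ) - k) ^ 2) ^ (-β)) / v ^ n) (𝓝[>] 0)
      (𝓝 ((∏ i ∈ Finset.range n, (β + i)) * (((2 * n).choose n : ℝ) * (n.factorial : ℝ)))) := by
  have h0 : Tendsto (fun v : ℝ => ∑ j ∈ Finset.range (n + 1), ∑ k ∈ Finset.range (n + 1),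
      wt n j * wt n k * (((1 + v * ((j : ℝ) - k) ^ 2) ^ (-β) -
      ∑ m ∈ Finset.range (n + 1), Ring.choose (-β) m * (v * ((j : ℝ) - k) ^ 2) ^ m) / v ^ n))
      (𝓝[>] 0) (𝓝 (∑ j ∈ Finset.range (n + 1), ∑ k ∈ Finset.range (n + 1), wt n j * wt n k * 0)) :=
    tendsto_finsetSum _ fun j _ => tendsto_finsetSum _ fun k _ => (taylor_rem β n _).const_mul _
  simp only [mul_zero, Finset.sum_const_zero] at h0
  have h1 := h0.add_const ((∏ i ∈ Finset.range n, (β + i)) *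
    (((2 * n).choose n : ℝ) * (n.factorial : ℝ)))
  rw [zero_add] at h1
  refine h1.congr' ?_
  filter_upwards [self_mem_nhdsWithin] with v hv
  have hv' : (0 : ℝ) < v := hv
  have e : ∑ j ∈ Finset.range (n + 1), ∑ k ∈ Finset.range (n + 1),
      wt n j * wt n k * ∑ m ∈ Finset.range (n + 1), Ring.choose (-β) m * (v * ((j : ℝ) - k) ^ 2) ^ m
      = v ^ n * ((∏ i ∈ Finset.range n, (β + i)) *
    (((2 * n).choose n : ℝ) * (n.factorial : ℝ))) := by
    have e1 : ∑ j ∈ Finset.range (n + 1), ∑ k ∈ Finset.range (n + 1),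
      wt n j * wt n k * ∑ m ∈ Finset.range (n + 1), Ring.choose (-β) m * (v * ((j : ℝ) - k) ^ 2) ^ m
      = ∑ m ∈ Finset.range (n + 1), Ring.choose (-β) m * v ^ m *
        ∑ j ∈ Finset.range (n + 1), ∑ k ∈ Finset.range (n + 1),
          wt n j * wt n k * (((j : ℝ) - k) ^ 2) ^ m := by
      simp_rw [Finset.mul_sum]
      symm
      rw [Finset.sum_comm]
      refine Finset.sum_congr rfl fun j _ => ?_
      rw [Finset.sum_comm]
      refine Finset.sum_congr rfl fun k _ => Finset.sum_congr rfl fun m _ => ?_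
      rw [mul_pow]; ring
    rw [e1, Finset.sum_range_succ, Finset.sum_eq_zero, mom_eq, ← choose_neg_prod]
    · ring
    · intro m hm
      rw [mom_lt (Finset.mem_range.1 hm), mul_zero]
  rw [← mul_right_inj' (pow_pos hv' n).ne', mul_add, ← e, mul_div_cancel₀ _ (pow_pos hv' n).ne',
    Finset.mul_sum, ← Finset.sum_add_distrib]
  refine Finset.sum_congr rfl fun j _ => ?_
  rw [Finset.mul_sum, ← Finset.sum_add_distrib]
  refine Finset.sum_congr rfl fun k _ => ?_
  have := (pow_pos hv' n).ne'
  field_simp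
  ring

lemma prod_bound {d : ℕ} (hd : 0 < d) {β₁ β₂ lam : ℝ}
    (h : IsPSDKernel (fun x y : EuclideanSpace ℝ (Fin d) =>
          (lam : ℂ) * invMultiquadricK d β₂ x y - invMultiquadricK d β₁ x y)) (n : ℕ) :
    ∏ i ∈ Finset.range n, (β₁ + i) ≤ lam * ∏ i ∈ Finset.range n, (β₂ + i) := by
  have l1 := form_lim β₁ n
  have l2 := (form_lim β₂ n).const_mul lam
  have h3 := le_of_tendsto_of_tendsto l1 l2 (by
    filter_upwards [self_mem_nhdsWithin] with v hv
    have hv' : (0 : ℝ) < v := hv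
    have h4 := real_of_psd h (ι := Finset.range (n + 1))
      (fun j => EuclideanSpace.single (⟨0, hd⟩ : Fin d) (Real.sqrt v * (j : ℕ))) (fun j => wt n j)
    have e : ∀ β : ℝ, ∑ j : Finset.range (n + 1), ∑ k : Finset.range (n + 1), wt n j * wt n k *
        (1 + ‖EuclideanSpace.single (⟨0, hd⟩ : Fin d) (Real.sqrt v * (j : ℕ)) -
          EuclideanSpace.single (⟨0, hd⟩ : Fin d) (Real.sqrt v * (k : ℕ))‖ ^ 2) ^ (-β)
        = ∑ j ∈ Finset.range (n + 1), ∑ k ∈ Finset.range (n + 1),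
      wt n j * wt n k * (1 + v * ((j : ℝ) - k) ^ 2) ^ (-β) := by
      intro β
      rw [← Finset.sum_coe_sort (Finset.range (n + 1))]
      refine Finset.sum_congr rfl fun j _ => ?_
      rw [← Finset.sum_coe_sort (Finset.range (n + 1))]
      refine Finset.sum_congr rfl fun k _ => ?_
      have : EuclideanSpace.single (⟨0, hd⟩ : Fin d) (Real.sqrt v * (j : ℕ)) -
          EuclideanSpace.single (⟨0, hd⟩ : Fin d) (Real.sqrt v * (k : ℕ)) =
          EuclideanSpace.single (⟨0, hd⟩ : Fin d) (Real.sqrt v * ((j : ℕ) - (k : ℕ))) := by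
        ext i
        simp
        split_ifs <;> ring
      rw [this, PiLp.norm_single, Real.norm_eq_abs, sq_abs, mul_pow, Real.sq_sqrt hv'.le]
    rw [e, e] at h4
    rw [← mul_div_assoc]
    gcongr)
  rw [← mul_assoc lam] at h3
  refine le_of_mul_le_mul_right h3 ?_
  have := Nat.choose_pos (show n ≤ 2 * n by omega)
  have := n.factorial_pos
  positivity

lemma not_gt {d : ℕ} (hd : 0 < d) {β₁ β₂ lam : ℝ} (hβ₂ : 0 < β₂)
    (h : IsPSDKernel (fun x y : EuclideanSpace ℝ (Fin d) =>
          (lam : ℂ) * invMultiquadricK d β₂ x y - invMultiquadricK d β₁ x y)) : β₁ ≤ β₂ := by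
  by_contra! hlt
  set δ := β₁ - β₂ with hδ
  have δ0 : 0 < δ := by linarith
  have h1 : ∀ n : ℕ, (1 + ∑ i ∈ Finset.range n, δ / (β₂ + i)) * ∏ i ∈ Finset.range n, (β₂ + i) ≤
      ∏ i ∈ Finset.range n, (β₁ + i) := by
    intro n
    induction n with
    | zero => simp
    | succ n ih =>
      rw [Finset.sum_range_succ, Finset.prod_range_succ, Finset.prod_range_succ]
      have p1 : 0 < ∏ i ∈ Finset.range n, (β₂ + (i : ℝ)) := Finset.prod_pos fun i _ => by positivity
      have p2 : 0 ≤ ∑ i ∈ Finset.range n, δ / (β₂ + (i : ℝ)) :=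
        Finset.sum_nonneg fun i _ => by positivity
      have p3 : 0 < β₂ + (n : ℝ) := by positivity
      have p4 : 0 < β₁ + (n : ℝ) := by linarith
      calc _ = (1 + ∑ i ∈ Finset.range n, δ / (β₂ + i)) * (∏ i ∈ Finset.range n, (β₂ + (i : ℝ))) * (β₂ + n)
              + δ * (∏ i ∈ Finset.range n, (β₂ + (i : ℝ))) := by field_simp; ring
        _ ≤ (1 + ∑ i ∈ Finset.range n, δ / (β₂ + i)) * (∏ i ∈ Finset.range n, (β₂ + (i : ℝ))) * (β₂ + n)
              + δ * ((1 + ∑ i ∈ Finset.range n, δ / (β₂ + i)) * (∏ i ∈ Finset.range n, (β₂ + (i : ℝ)))) := by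
            gcongr
            nlinarith [mul_nonneg p2 p1.le]
        _ = ((1 + ∑ i ∈ Finset.range n, δ / (β₂ + i)) * (∏ i ∈ Finset.range n, (β₂ + (i : ℝ)))) * (β₁ + n) := by
            rw [hδ]; ring
        _ ≤ _ := by gcongr
  have h2 : ∀ n : ℕ, ∑ i ∈ Finset.range n, δ / (β₂ + i) ≤ lam := by
    intro n
    have p1 : 0 < ∏ i ∈ Finset.range n, (β₂ + (i : ℝ)) := Finset.prod_pos fun i _ => by positivity
    have := le_of_mul_le_mul_right ((h1 n).trans (prod_bound hd h n)) p1
    linarith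
  have h3 := (Real.tendsto_sum_range_one_div_nat_succ_atTop.const_mul_atTop
    (show 0 < δ / (β₂ + 1) by positivity))
  obtain ⟨n, hn⟩ := (h3.eventually_gt_atTop lam).exists
  have h4 : δ / (β₂ + 1) * ∑ i ∈ Finset.range n, 1 / ((i : ℝ) + 1) ≤
      ∑ i ∈ Finset.range n, δ / (β₂ + i) := by
    rw [Finset.mul_sum]
    refine Finset.sum_le_sum fun i _ => ?_
    rw [div_mul_div_comm, mul_one]
    gcongr
    nlinarith [mul_nonneg hβ₂.le (Nat.cast_nonneg (α := ℝ) i)]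
  linarith [h2 n]

/-- cubic grid -/
def grid (d n : ℕ) : Finset (Fin d → ℕ) := Fintype.piFinset fun _ => Finset.range n

lemma grid_card (d n : ℕ) : (grid d n).card = n ^ d := by simp [grid]

lemma grid_mem {d n : ℕ} {j : Fin d → ℕ} : j ∈ grid d n ↔ ∀ i, j i < n := by simp [grid]

/-- squared distance -/
def sqd {d : ℕ} (j k : Fin d → ℕ) : ℝ := ∑ i, ((j i : ℝ) - k i) ^ 2

lemma sqd_nonneg {d : ℕ} (j k : Fin d → ℕ) : 0 ≤ sqd j k :=
  Finset.sum_nonneg fun _ _ => sq_nonneg _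

lemma grid_psd {d : ℕ} {β₁ β₂ lam : ℝ}
    (h : IsPSDKernel (fun x y : EuclideanSpace ℝ (Fin d) =>
          (lam : ℂ) * invMultiquadricK d β₂ x y - invMultiquadricK d β₁ x y)) (n : ℕ) :
    ∑ j ∈ grid d n, ∑ k ∈ grid d n, (1 + sqd j k) ^ (-β₁) ≤
      lam * ∑ j ∈ grid d n, ∑ k ∈ grid d n, (1 + sqd j k) ^ (-β₂) := by
  have h4 := real_of_psd h (ι := grid d n)
      (fun j => WithLp.toLp 2 (fun i => ((j : Fin d → ℕ) i : ℝ))) (fun _ => 1)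
  have e : ∀ β : ℝ, ∑ j : grid d n, ∑ k : grid d n, (1 : ℝ) * 1 *
      (1 + ‖WithLp.toLp 2 (fun i => ((j : Fin d → ℕ) i : ℝ)) -
        WithLp.toLp 2 (fun i => ((k : Fin d → ℕ) i : ℝ))‖ ^ 2) ^ (-β) =
      ∑ j ∈ grid d n, ∑ k ∈ grid d n, (1 + sqd j k) ^ (-β) := by
    intro β
    rw [← Finset.sum_coe_sort (grid d n)]
    refine Finset.sum_congr rfl fun j _ => ?_
    rw [← Finset.sum_coe_sort (grid d n)]
    refine Finset.sum_congr rfl fun k _ => ?_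
    rw [EuclideanSpace.norm_sq_eq]
    simp [sqd]
  rw [e, e] at h4
  exact h4

lemma near_card {d n R : ℕ} (j : Fin d → ℕ) {T : ℝ} (hT : T ≤ (R : ℝ) ^ 2) :
    ((grid d n).filter (fun k => sqd j k < T)).card ≤ (2 * R + 1) ^ d := by
  have hsub : (grid d n).filter (fun k => sqd j k < T) ⊆
      Fintype.piFinset fun i => Finset.Icc (j i - R) (j i + R) := by
    intro k hk
    rw [Finset.mem_filter] at hk
    rw [Fintype.mem_piFinset]
    intro i
    have h1 : ((j i : ℝ) - k i) ^ 2 ≤ sqd j k :=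
      Finset.single_le_sum (f := fun i => ((j i : ℝ) - k i) ^ 2) (fun _ _ => sq_nonneg _)
        (Finset.mem_univ i)
    have h2 : ((j i : ℝ) - k i) ^ 2 ≤ (R : ℝ) ^ 2 := by linarith [hk.2]
    have h3 := abs_le_of_sq_le_sq' h2 (by positivity)
    have h4 : (k i : ℝ) ≤ ((j i + R : ℕ) : ℝ) := by push_cast; linarith [h3.1]
    have h5 : (j i : ℝ) ≤ ((k i + R : ℕ) : ℝ) := by push_cast; linarith [h3.2]
    rw [Nat.cast_le] at h4 h5
    rw [Finset.mem_Icc]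
    omega
  refine (Finset.card_le_card hsub).trans ?_
  rw [Fintype.card_piFinset]
  refine (Finset.prod_le_pow_card _ _ (2 * R + 1) fun i _ => ?_).trans (by simp)
  rw [Nat.card_Icc]
  omega

lemma grid_upper {d : ℕ} {β₁ β₂ lam : ℝ} (hl : 0 ≤ lam) (hβ₂ : 0 < β₂) (hlt : β₁ < β₂)
    (h : IsPSDKernel (fun x y : EuclideanSpace ℝ (Fin d) =>
          (lam : ℂ) * invMultiquadricK d β₂ x y - invMultiquadricK d β₁ x y)) :
    ∃ B : ℝ, ∀ n, ∑ j ∈ grid d n, ∑ k ∈ grid d n, (1 + sqd j k) ^ (-β₁) ≤ B * (n : ℝ) ^ d := by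
  have t := (tendsto_rpow_neg_atTop (sub_pos.2 hlt)).const_mul lam
  rw [mul_zero] at t
  obtain ⟨T, hT⟩ := Filter.eventually_atTop.1 (t.eventually_le_const (show (0 : ℝ) < 1 / 2 by norm_num))
  obtain ⟨R, hR⟩ := exists_nat_ge T
  have hR2 : T ≤ (R : ℝ) ^ 2 := by
    have : (R : ℝ) ≤ (R : ℝ) ^ 2 := by exact_mod_cast Nat.le_self_pow (by norm_num) R
    linarith
  refine ⟨2 * (lam * (2 * R + 1) ^ d), fun n => ?_⟩
  have key : ∀ j k : Fin d → ℕ, lam * (1 + sqd j k) ^ (-β₂) ≤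
      1 / 2 * (1 + sqd j k) ^ (-β₁) + if sqd j k < T then lam else 0 := by
    intro j k
    have h0 := sqd_nonneg j k
    have hp : 0 < 1 + sqd j k := by linarith
    have hp1 : 0 < (1 + sqd j k) ^ (-β₁) := Real.rpow_pos_of_pos hp _
    split_ifs with hlt2
    · have : (1 + sqd j k) ^ (-β₂) ≤ 1 :=
        Real.rpow_le_one_of_one_le_of_nonpos (by linarith) (by linarith)
      nlinarith
    · have e : (1 + sqd j k) ^ (-β₂) = (1 + sqd j k) ^ (-(β₂ - β₁)) * (1 + sqd j k) ^ (-β₁) := by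
        rw [← Real.rpow_add hp]; congr 1; ring
      have := hT (1 + sqd j k) (by push Not at hlt2; linarith)
      rw [e, ← mul_assoc, add_zero]
      gcongr
  have h1 := grid_psd h n
  have h2 : lam * ∑ j ∈ grid d n, ∑ k ∈ grid d n, (1 + sqd j k) ^ (-β₂) ≤
      1 / 2 * ∑ j ∈ grid d n, ∑ k ∈ grid d n, (1 + sqd j k) ^ (-β₁) +
        (n : ℝ) ^ d * (lam * (2 * R + 1) ^ d) := by
    have h3 : (n : ℝ) ^ d * (lam * (2 * R + 1) ^ d) = ∑ j ∈ grid d n, lam * (2 * (R : ℝ) + 1) ^ d := by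
      rw [Finset.sum_const, grid_card, nsmul_eq_mul]; push_cast; rfl
    rw [h3, Finset.mul_sum, Finset.mul_sum, ← Finset.sum_add_distrib]
    refine Finset.sum_le_sum fun j _ => ?_
    rw [Finset.mul_sum, Finset.mul_sum]
    refine (Finset.sum_le_sum fun k _ => key j k).trans ?_
    rw [Finset.sum_add_distrib]
    gcongr
    rw [← Finset.sum_filter, Finset.sum_const, nsmul_eq_mul, mul_comm]
    gcongr
    exact_mod_cast near_card j hR2
  linarith

/-- one-sided lattice sum -/
noncomputable def latSum (d : ℕ) (β : ℝ) (n : ℕ) : ℝ := ∑ m ∈ grid d n, (1 + sqd m 0) ^ (-β)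

lemma grid_lower (d : ℕ) (β : ℝ) (n : ℕ) : (n : ℝ) ^ d * latSum d β n ≤
    ∑ j ∈ grid d (2 * n), ∑ k ∈ grid d (2 * n), (1 + sqd j k) ^ (-β) := by
  have hpos : ∀ j k : Fin d → ℕ, 0 ≤ (1 + sqd j k) ^ (-β) := fun j k =>
    Real.rpow_nonneg (by linarith [sqd_nonneg j k]) _
  have h3 : (n : ℝ) ^ d * latSum d β n = ∑ j ∈ grid d n, latSum d β n := by
    rw [Finset.sum_const, grid_card, nsmul_eq_mul]; push_cast; rfl
  rw [h3]
  have hsub : grid d n ⊆ grid d (2 * n) := fun j hj => by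
    rw [grid_mem] at *
    intro i
    have := hj i
    omega
  refine le_trans (Finset.sum_le_sum fun j hj => ?_) (Finset.sum_le_sum_of_subset_of_nonneg hsub
    fun j _ _ => Finset.sum_nonneg fun k _ => hpos j k)
  have hs2 : (grid d n).map (addLeftEmbedding j) ⊆ grid d (2 * n) := by
    intro k hk
    rw [Finset.mem_map] at hk
    obtain ⟨m, hm, rfl⟩ := hk
    rw [grid_mem] at *
    intro i
    have := hj i
    have := hm i
    simp only [addLeftEmbedding_apply, Pi.add_apply]
    omega
  refine le_trans ?_ (Finset.sum_le_sum_of_subset_of_nonneg hs2 fun k _ _ => hpos j k)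
  rw [Finset.sum_map, latSum]
  refine Finset.sum_le_sum fun m _ => le_of_eq ?_
  congr 2
  simp only [sqd, addLeftEmbedding_apply, Pi.add_apply, Pi.zero_apply]
  refine Finset.sum_congr rfl fun i _ => ?_
  push_cast
  ring

lemma latSum_double {d : ℕ} (hd : 0 < d) {β : ℝ} (hβ : β ≤ d / 2) {n : ℕ} (hn : 0 < n) :
    latSum d β n + (5 * d : ℝ) ^ (-((d : ℝ) / 2)) ≤ latSum d β (2 * n) := by
  have hsub : grid d n ⊆ grid d (2 * n) := fun j hj => by
    rw [grid_mem] at *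
    intro i
    have := hj i
    omega
  have hd1 : (1 : ℝ) ≤ d := by exact_mod_cast hd
  have hn1 : (1 : ℝ) ≤ n := by exact_mod_cast hn
  rw [latSum, latSum, ← Finset.sum_sdiff hsub, add_comm]
  gcongr
  have hterm : ∀ m ∈ grid d (2 * n) \ grid d n,
      (5 * d * (n : ℝ) ^ 2) ^ (-((d : ℝ) / 2)) ≤ (1 + sqd m 0) ^ (-β) := by
    intro m hm
    have hm1 := grid_mem.1 (Finset.mem_sdiff.1 hm).1
    have h0 := sqd_nonneg m 0
    have hb : sqd m 0 ≤ d * (2 * n : ℝ) ^ 2 := by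
      have : sqd m 0 ≤ ∑ i : Fin d, (2 * n : ℝ) ^ 2 := by
        refine Finset.sum_le_sum fun i _ => ?_
        have : (m i : ℝ) ≤ 2 * n := by exact_mod_cast (hm1 i).le
        simp only [Pi.zero_apply, Nat.cast_zero, sub_zero]
        gcongr
      simpa using this
    calc (5 * d * (n : ℝ) ^ 2) ^ (-((d : ℝ) / 2)) ≤ (1 + sqd m 0) ^ (-((d : ℝ) / 2)) := by
          apply Real.rpow_le_rpow_of_nonpos (by linarith) _ (by linarith)
          nlinarith [mul_le_mul hd1 (one_le_pow₀ hn1 (n := 2)) (by positivity) (by positivity)]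
      _ ≤ _ := Real.rpow_le_rpow_of_exponent_le (by linarith) (by linarith)
  have h2 := Finset.card_nsmul_le_sum _ _ _ hterm
  refine le_trans ?_ h2
  rw [Finset.card_sdiff_of_subset hsub, grid_card, grid_card, nsmul_eq_mul,
    Real.mul_rpow (x := 5 * (d : ℝ)) (y := (n : ℝ) ^ 2) (by positivity) (by positivity)]
  have e : ((n : ℝ) ^ 2) ^ (-((d : ℝ) / 2)) = ((n : ℝ) ^ d)⁻¹ := by
    rw [Real.rpow_neg (by positivity), ← Real.rpow_natCast, ← Real.rpow_mul (by positivity),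
      ← Real.rpow_natCast]
    congr 2
    push_cast
    ring
  rw [e]
  have hc : n ^ d ≤ (2 * n) ^ d - n ^ d := by
    rw [mul_pow]
    have : 2 ≤ 2 ^ d := Nat.le_self_pow hd.ne' 2
    have := Nat.mul_le_mul_right (n ^ d) this
    omega
  have hc' : (n : ℝ) ^ d ≤ (((2 * n) ^ d - n ^ d : ℕ) : ℝ) := by exact_mod_cast hc
  have hp : 0 < (n : ℝ) ^ d := by positivity
  calc (5 * d : ℝ) ^ (-((d : ℝ) / 2)) = (n : ℝ) ^ d * ((5 * d : ℝ) ^ (-((d : ℝ) / 2)) * ((n : ℝ) ^ d)⁻¹) := by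
        field_simp
    _ ≤ _ := by gcongr

lemma need_half {d : ℕ} (hd : 0 < d) {β₁ β₂ lam : ℝ} (hl : 0 ≤ lam) (hβ₂ : 0 < β₂) (hlt : β₁ < β₂)
    (h : IsPSDKernel (fun x y : EuclideanSpace ℝ (Fin d) =>
          (lam : ℂ) * invMultiquadricK d β₂ x y - invMultiquadricK d β₁ x y)) :
    (d : ℝ) / 2 < β₁ := by
  by_contra! hle
  obtain ⟨B, hB⟩ := grid_upper hl hβ₂ hlt h
  have h1 : ∀ n : ℕ, 0 < n → latSum d β₁ n ≤ B * 2 ^ d := by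
    intro n hn
    have h2 := (grid_lower d β₁ n).trans (hB (2 * n))
    have hp : 0 < (n : ℝ) ^ d := by positivity
    refine le_of_mul_le_mul_left (h2.trans_eq ?_) hp
    push_cast
    rw [mul_pow]; ring
  set c := (5 * d : ℝ) ^ (-((d : ℝ) / 2)) with hc
  have hcpos : 0 < c := by positivity
  have h2 : ∀ k : ℕ, k * c ≤ latSum d β₁ (2 ^ k) := by
    intro k
    induction k with
    | zero =>
      simp only [Nat.cast_zero, zero_mul]
      exact Finset.sum_nonneg fun m _ => Real.rpow_nonneg (by linarith [sqd_nonneg m 0]) _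
    | succ k ih =>
      have := latSum_double hd hle (n := 2 ^ k) (by positivity)
      rw [pow_succ, mul_comm (2 ^ k)]
      push_cast
      linarith
  obtain ⟨k, hk⟩ := exists_nat_gt (B * 2 ^ d / c)
  rw [div_lt_iff₀ hcpos] at hk
  linarith [h2 k, h1 (2 ^ k) (by positivity)]

/-- For distinct `β₁, β₂ > 0`, some `λ ≥ 0` makes `λM_{β₂} − M_{β₁}` a positive
semidefinite kernel on `ℝ^d` iff `d/2 < β₁ < β₂`. -/
theorem invMultiquadric_inclusion_iff (d : ℕ) (hd : 0 < d)
    (β₁ β₂ : ℝ) (hβ₁ : 0 < β₁) (hβ₂ : 0 < β₂) (hne : β₁ ≠ β₂) :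
    (∃ lam : ℝ, 0 ≤ lam ∧
        IsPSDKernel (fun x y : EuclideanSpace ℝ (Fin d) =>
          (lam : ℂ) * invMultiquadricK d β₂ x y - invMultiquadricK d β₁ x y)) ↔
      ((d : ℝ) / 2 < β₁ ∧ β₁ < β₂) := by
  constructor
  · rintro ⟨lam, hl, h⟩
    have hlt : β₁ < β₂ := lt_of_le_of_ne (not_gt hd hβ₂ h) hne
    exact ⟨need_half hd hl hβ₂ hlt h, hlt⟩
  · rintro ⟨h1, h2⟩
    exact suff d β₁ β₂ h1 h2
end

section
/- Let G_γ(x,y) = exp(−‖x−y‖²/γ) be the Gaussian kernel on ℝ^d with parameter γ > 0 (Euclidean norm ‖·‖), and let E_σ(x,y) = exp(−‖x−y‖₁/σ) be the ℓ¹-norm exponential kernel with parameter σ > 0, where ‖z‖₁ = ∑_{j=1}^d |z_j|. Then for all d ∈ ℕ and all γ, σ > 0: (a) there is no λ ≥ 0 for which λG_γ − E_σ is a positive semidefinite kernel on ℝ^d; (b) λE_σ − G_γ is a positive semidefinite kernel on ℝ^d for λ = (max(1, 4σ²/γ) · √(γπ)/(2σ))^d. -/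
open scoped ComplexOrder

open MeasureTheory FourierTransform in
theorem psd_of_fourier (f g : ℝ → ℝ) (hc : Continuous f) (hi : Integrable f) (hev : ∀ x, f (-x) = f x)
    (hg : ∀ w, 0 ≤ g w) (hgi : Integrable g)
    (hF : 𝓕 (fun x => (f x : ℂ)) = fun w => (g w : ℂ)) (n : ℕ) (t : Fin n → ℝ) :
    (Matrix.of fun j k : Fin n => (f (t j - t k) : ℂ)).PosSemidef := by
  have hrep : ∀ v, (f v : ℂ) = ∫ w : ℝ, Complex.exp (((2 * Real.pi * (w * v) : ℝ) : ℂ) * Complex.I) * (g w : ℂ) := by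
    intro v
    have h := congrFun (Continuous.fourierInv_fourier_eq (f := fun x => (f x : ℂ))
      (Complex.continuous_ofReal.comp hc) hi.ofReal (by rw [hF]; exact hgi.ofReal)) v
    rw [hF, Real.fourierInv_eq'] at h
    rw [← h]
    congr 1
    ext w
    simp [smul_eq_mul, mul_comm]
  rw [Matrix.posSemidef_iff_dotProduct_mulVec]
  refine ⟨?_, ?_⟩
  · ext j k
    simp [Matrix.conjTranspose_apply, ← hev (t j - t k)]
  · intro x
    have key : star x ⬝ᵥ ((Matrix.of fun j k : Fin n => (f (t j - t k) : ℂ)).mulVec x) =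
        ((∫ w : ℝ, Complex.normSq (∑ j, star (x j) * Complex.exp (((2 * Real.pi * (w * t j) : ℝ) : ℂ) * Complex.I)) * g w : ℝ) : ℂ) := by
      rw [← integral_complex_ofReal]
      have h1 : ∀ w : ℝ, ((Complex.normSq (∑ j, star (x j) * Complex.exp (((2 * Real.pi * (w * t j) : ℝ) : ℂ) * Complex.I)) * g w : ℝ) : ℂ)
        = ∑ j, ∑ k, star (x j) * x k * (Complex.exp (((2 * Real.pi * (w * (t j - t k)) : ℝ) : ℂ) * Complex.I) * (g w : ℂ)) := by
        intro w
        rw [Complex.ofReal_mul, ← Complex.mul_conj, map_sum, Finset.sum_mul_sum, Finset.sum_mul]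
        refine Finset.sum_congr rfl fun j _ => ?_
        rw [Finset.sum_mul]
        refine Finset.sum_congr rfl fun k _ => ?_
        have : Complex.exp (((2 * Real.pi * (w * (t j - t k)) : ℝ) : ℂ) * Complex.I) =
          Complex.exp (((2 * Real.pi * (w * t j) : ℝ) : ℂ) * Complex.I) *
          (starRingEnd ℂ) (Complex.exp (((2 * Real.pi * (w * t k) : ℝ) : ℂ) * Complex.I)) := by
          rw [← Complex.exp_conj, ← Complex.exp_add]
          congr 1
          rw [map_mul, Complex.conj_ofReal, Complex.conj_I]
          push_cast; ring
        rw [this, map_mul]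
        simp only [Complex.star_def, Complex.conj_conj]
        ring
      simp_rw [h1]
      have hint : ∀ j k, Integrable fun w : ℝ => star (x j) * x k * (Complex.exp (((2 * Real.pi * (w * (t j - t k)) : ℝ) : ℂ) * Complex.I) * (g w : ℂ)) := by
        intro j k
        refine Integrable.const_mul ?_ _
        refine Integrable.bdd_mul (c := 1) hgi.ofReal ?_ ?_
        · exact Continuous.aestronglyMeasurable (by fun_prop)
        · exact Filter.Eventually.of_forall fun w => by rw [Complex.norm_exp_ofReal_mul_I]
      rw [integral_finsetSum _ fun j _ => integrable_finsetSum _ fun k _ => hint j k]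
      simp_rw [dotProduct, Matrix.mulVec, dotProduct, Finset.mul_sum]
      refine Finset.sum_congr rfl fun j _ => ?_
      rw [integral_finsetSum _ fun k _ => hint j k]
      refine Finset.sum_congr rfl fun k _ => ?_
      rw [integral_const_mul, ← hrep]
      simp only [Matrix.of_apply, Pi.star_apply]
      ring
    rw [key]
    rw [Complex.zero_le_real]
    exact integral_nonneg fun w => mul_nonneg (Complex.normSq_nonneg _) (hg w)

open MeasureTheory FourierTransform in
theorem fourier_gauss1 (γ : ℝ) (hγ : 0 < γ) :
    𝓕 (fun x : ℝ => ((Real.exp (-x ^ 2 / γ) : ℝ) : ℂ)) =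
      fun w : ℝ => ((Real.sqrt (γ * Real.pi) * Real.exp (-(Real.pi ^ 2 * γ) * w ^ 2) : ℝ) : ℂ) := by
  ext w
  have h := fourier_gaussian_innerProductSpace (V := ℝ) (b := ((1 / γ : ℝ) : ℂ)) (by
    rw [Complex.ofReal_re]; positivity) w
  have e : (fun v : ℝ => Complex.exp (-((1 / γ : ℝ) : ℂ) * (‖v‖ : ℂ) ^ 2)) = (fun x : ℝ => ((Real.exp (-x ^ 2 / γ) : ℝ) : ℂ)) := by
    ext v
    rw [← Complex.ofReal_pow, Real.norm_eq_abs, sq_abs]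
    push_cast
    congr 1
    ring
  rw [e] at h
  rw [h, ← Complex.ofReal_pow ‖w‖, Real.norm_eq_abs, sq_abs, Real.sqrt_eq_rpow]
  push_cast
  rw [Complex.ofReal_cpow (by positivity)]
  have hγ' : (γ : ℂ) ≠ 0 := by exact_mod_cast hγ.ne'
  congr 1
  · simp only [Module.finrank_self]
    push_cast
    congr 1
    field_simp
  · congr 1
    field_simp

open MeasureTheory in
theorem integrable_exp_abs (a : ℝ) (ha : 0 < a) : Integrable (fun x : ℝ => Real.exp (-|x| / a)) := by
  rw [← integrableOn_univ, ← Set.Iic_union_Ioi (a := (0:ℝ))]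
  refine IntegrableOn.union ?_ ?_
  · refine (integrableOn_exp_mul_Iic (a := 1 / a) (by positivity) 0).congr_fun ?_ measurableSet_Iic
    intro x hx
    simp only [Set.mem_Iic] at hx
    simp only [abs_of_nonpos hx]
    congr 1; ring
  · refine (integrableOn_exp_mul_Ioi (a := -(1 / a)) (by rw [neg_lt_zero]; positivity) 0).congr_fun ?_ measurableSet_Ioi
    intro x hx
    simp only [Set.mem_Ioi] at hx
    simp only [abs_of_pos hx]
    congr 1; ring

open MeasureTheory FourierTransform in
theorem fourier_exp1 (a : ℝ) (ha : 0 < a) :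
    𝓕 (fun x : ℝ => ((Real.exp (-|x| / a) : ℝ) : ℂ)) =
      fun w : ℝ => ((2 * a / (1 + (2 * Real.pi * a * w) ^ 2) : ℝ) : ℂ) := by
  ext w
  have ha' : (a : ℂ) ≠ 0 := by exact_mod_cast ha.ne'
  set p : ℂ := ((1 / a : ℝ) : ℂ) + ((-2 * Real.pi * w : ℝ) : ℂ) * Complex.I with hp
  set q : ℂ := ((-(1 / a) : ℝ) : ℂ) + ((-2 * Real.pi * w : ℝ) : ℂ) * Complex.I with hq
  have hpr : 0 < p.re := by simp [hp, ha]
  have hqr : q.re < 0 := by simp [hq, ha]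
  rw [Real.fourier_real_eq_integral_exp_smul]
  have e1 : Set.EqOn (fun v : ℝ => Complex.exp (p * v)) (fun v : ℝ => Complex.exp (↑(-2 * Real.pi * v * w) * Complex.I) • ((Real.exp (-|v| / a) : ℝ) : ℂ)) (Set.Iic 0) := by
    intro x hx
    simp only [Set.mem_Iic] at hx
    simp only [abs_of_nonpos hx, smul_eq_mul, Complex.ofReal_exp, ← Complex.exp_add, hp]
    congr 1; push_cast; ring
  have e2 : Set.EqOn (fun v : ℝ => Complex.exp (q * v)) (fun v : ℝ => Complex.exp (↑(-2 * Real.pi * v * w) * Complex.I) • ((Real.exp (-|v| / a) : ℝ) : ℂ)) (Set.Ioi 0) := by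
    intro x hx
    simp only [Set.mem_Ioi] at hx
    simp only [abs_of_pos hx, smul_eq_mul, Complex.ofReal_exp, ← Complex.exp_add, hq]
    congr 1; push_cast; ring
  have i1 := (integrableOn_exp_mul_complex_Iic hpr 0).congr_fun e1 measurableSet_Iic
  have i2 := (integrableOn_exp_mul_complex_Ioi hqr 0).congr_fun e2 measurableSet_Ioi
  rw [← intervalIntegral.integral_Iic_add_Ioi i1 i2, ← setIntegral_congr_fun measurableSet_Iic e1,
    ← setIntegral_congr_fun measurableSet_Ioi e2, integral_exp_mul_complex_Iic hpr,
    integral_exp_mul_complex_Ioi hqr]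
  have hp0 : p ≠ 0 := by intro h; rw [h] at hpr; simp at hpr
  have hq0 : q ≠ 0 := by intro h; rw [h] at hqr; simp at hqr
  have hpq : p * q = -(((1 + (2 * Real.pi * a * w) ^ 2) / a ^ 2 : ℝ) : ℂ) := by
    have hI : Complex.I ^ 2 = -1 := Complex.I_sq
    rw [hp, hq]; push_cast; field_simp; linear_combination (4 * (Real.pi:ℂ) ^ 2 * w ^ 2 * a ^ 2) * hI
  have hqp : q - p = -((2 / a : ℝ) : ℂ) := by rw [hp, hq]; push_cast; ring
  have : Complex.exp (p * (0:ℝ)) / p + -Complex.exp (q * (0:ℝ)) / q = (q - p) / (p * q) := by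
    simp; field_simp; ring
  rw [this, hpq, hqp, neg_div_neg_eq, ← Complex.ofReal_div]
  congr 1
  have : 1 + (2 * Real.pi * a * w) ^ 2 ≠ 0 := by positivity
  field_simp

open MeasureTheory in
theorem integrable_gauss1 (γ : ℝ) (hγ : 0 < γ) : Integrable (fun x : ℝ => Real.exp (-x ^ 2 / γ)) := by
  refine (integrable_exp_neg_mul_sq (b := 1 / γ) (by positivity)).congr (Filter.Eventually.of_forall fun x => ?_)
  simp only; congr 1; ring

theorem gauss1_psd (γ : ℝ) (hγ : 0 < γ) (n : ℕ) (t : Fin n → ℝ) :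
    (Matrix.of fun j k : Fin n => ((Real.exp (-(t j - t k) ^ 2 / γ) : ℝ) : ℂ)).PosSemidef := by
  refine psd_of_fourier (fun x => Real.exp (-x ^ 2 / γ)) _ (by fun_prop) (integrable_gauss1 γ hγ) (by simp)
    (fun w => ?_) ?_ (fourier_gauss1 γ hγ) n t
  · positivity
  · exact (integrable_exp_neg_mul_sq (b := Real.pi ^ 2 * γ) (by positivity)).const_mul _

open MeasureTheory FourierTransform in
theorem diff1_psd (γ σ : ℝ) (hγ : 0 < γ) (hσ : 0 < σ) (n : ℕ) (t : Fin n → ℝ) :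
    (Matrix.of fun j k : Fin n => ((max 1 (4 * σ ^ 2 / γ) * (Real.sqrt (γ * Real.pi) / (2 * σ))
      * Real.exp (-|t j - t k| / σ) - Real.exp (-(t j - t k) ^ 2 / γ) : ℝ) : ℂ)).PosSemidef := by
  set m := max 1 (4 * σ ^ 2 / γ) with hm
  set L := m * (Real.sqrt (γ * Real.pi) / (2 * σ)) with hL
  have hEi := (integrable_exp_abs σ hσ).const_mul L
  have hGi := integrable_gauss1 γ hγ
  refine psd_of_fourier (fun x => L * Real.exp (-|x| / σ) - Real.exp (-x ^ 2 / γ))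
    (fun w => L * (2 * σ / (1 + (2 * Real.pi * σ * w) ^ 2)) - Real.sqrt (γ * Real.pi) * Real.exp (-(Real.pi ^ 2 * γ) * w ^ 2)) (by fun_prop) (hEi.sub hGi) (by simp)
    (fun w => ?_) ?_ ?_ n t
  · set u := Real.pi ^ 2 * γ * w ^ 2 with hu
    have hu0 : 0 ≤ u := by positivity
    have h1 : Real.exp (-(Real.pi ^ 2 * γ) * w ^ 2) * (1 + u) ≤ 1 := by
      rw [neg_mul, Real.exp_neg, ← hu, inv_mul_le_one₀ (Real.exp_pos _), add_comm]
      exact Real.add_one_le_exp u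
    have h2 : 1 + (2 * Real.pi * σ * w) ^ 2 ≤ m * (1 + u) := by
      have e : (2 * Real.pi * σ * w) ^ 2 = 4 * σ ^ 2 / γ * u := by rw [hu]; field_simp; ring
      rw [e, mul_add, mul_one]
      exact add_le_add (le_max_left _ _) (mul_le_mul_of_nonneg_right (le_max_right _ _) hu0)
    have h3 : L * (2 * σ / (1 + (2 * Real.pi * σ * w) ^ 2)) = Real.sqrt (γ * Real.pi) * (m / (1 + (2 * Real.pi * σ * w) ^ 2)) := by
      rw [hL]; field_simp
    rw [h3, sub_nonneg]
    refine mul_le_mul_of_nonneg_left ?_ (Real.sqrt_nonneg _)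
    rw [le_div_iff₀ (by positivity)]
    have hm0 : 0 ≤ m := le_trans zero_le_one (le_max_left _ _)
    calc _ ≤ Real.exp (-(Real.pi ^ 2 * γ) * w ^ 2) * (m * (1 + u)) := by gcongr
      _ = m * (Real.exp (-(Real.pi ^ 2 * γ) * w ^ 2) * (1 + u)) := by ring
      _ ≤ m * 1 := by gcongr
      _ = m := mul_one m
  · refine Integrable.sub (Integrable.const_mul ?_ _) ((integrable_exp_neg_mul_sq (b := Real.pi ^ 2 * γ) (by positivity)).const_mul _)
    simp only [div_eq_mul_inv]
    refine Integrable.const_mul ?_ _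
    exact integrable_inv_one_add_sq.comp_mul_left' (R := 2 * Real.pi * σ) (by positivity)
  · have hE := fourier_exp1 σ hσ
    have hG := fourier_gauss1 γ hγ
    ext w
    have hE' := congrFun hE w
    have hG' := congrFun hG w
    rw [Real.fourier_real_eq] at hE' hG' ⊢
    have iE : Integrable fun v : ℝ => Real.fourierChar (-(v * w)) • ((Real.exp (-|v| / σ) : ℝ) : ℂ) := by
      have := (Real.fourierIntegral_convergent_iff (f := fun v : ℝ => ((Real.exp (-|v| / σ) : ℝ) : ℂ)) w).2 (integrable_exp_abs σ hσ).ofReal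
      simpa [mul_comm] using this
    have iG : Integrable fun v : ℝ => Real.fourierChar (-(v * w)) • ((Real.exp (-v ^ 2 / γ) : ℝ) : ℂ) := by
      have := (Real.fourierIntegral_convergent_iff (f := fun v : ℝ => ((Real.exp (-v ^ 2 / γ) : ℝ) : ℂ)) w).2 hGi.ofReal
      simpa [mul_comm] using this
    rw [Complex.ofReal_sub, Complex.ofReal_mul L, ← hE', ← hG', ← integral_const_mul, ← integral_sub (iE.const_mul _) iG]
    congr 1
    ext v
    simp only [Circle.smul_def, smul_eq_mul]
    push_cast
    ring

theorem schur_psd {n : ℕ} {A B : Matrix (Fin n) (Fin n) ℂ} (hA : A.PosSemidef)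
    (hB : B.PosSemidef) : (A.hadamard B).PosSemidef :=
  Matrix.PosSemidef.hadamard (𝕜 := ℂ) hA hB

theorem prod_psd {ι : Type*} (n : ℕ) (A B : ι → Fin n → Fin n → ℂ)
    (hB : ∀ i, (Matrix.of (B i)).PosSemidef)
    (hAB : ∀ i, (Matrix.of fun j k => A i j k - B i j k).PosSemidef) (s : Finset ι) :
    (Matrix.of fun j k => ∏ i ∈ s, B i j k).PosSemidef ∧
    (Matrix.of fun j k => ∏ i ∈ s, A i j k - ∏ i ∈ s, B i j k).PosSemidef := by
  classical
  induction s using Finset.induction_on with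
  | empty =>
    refine ⟨?_, ?_⟩
    · convert Matrix.posSemidef_vecMulVec_self_star (fun _ : Fin n => (1 : ℂ)) using 1
      ext j k; simp [Matrix.vecMulVec_apply]
    · convert (Matrix.PosSemidef.zero : (0 : Matrix (Fin n) (Fin n) ℂ).PosSemidef) using 1
      ext j k; simp
  | insert i s hi ih =>
    obtain ⟨h1, h2⟩ := ih
    refine ⟨?_, ?_⟩
    · convert schur_psd (hB i) h1 using 1
      ext j k; simp [Finset.prod_insert hi, Matrix.hadamard_apply]
    · have hA : (Matrix.of (A i)).PosSemidef := by
        convert (hAB i).add (hB i) using 1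
        ext j k; simp
      convert (schur_psd hA h2).add (schur_psd (hAB i) h1) using 1
      ext j k; simp only [Finset.prod_insert hi, Matrix.hadamard_apply, Matrix.add_apply, Matrix.of_apply]
      ring

theorem part_a (d : ℕ) (hd : 0 < d) (γ σ : ℝ) (hγ : 0 < γ) (hσ : 0 < σ) (lam : ℝ) (hl : 0 ≤ lam)
    (h : IsPSDKernel (fun x y : EuclideanSpace ℝ (Fin d) =>
          (lam : ℂ) * gaussK d γ x y - l1expK d σ x y)) : False := by
  set r : ℝ := σ * γ / (γ + 2 * lam * σ ^ 2) with hr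
  have hr0 : 0 < r := by positivity
  have hrD : r * (γ + 2 * lam * σ ^ 2) = σ * γ := by rw [hr]; field_simp
  let v : EuclideanSpace ℝ (Fin d) := EuclideanSpace.single ⟨0, hd⟩ r
  have hs : ∑ j, |v j| = r := by
    rw [Finset.sum_eq_single ⟨0, hd⟩]
    · simp [v, abs_of_pos hr0]
    · intro b _ hb; simp [v, hb]
    · simp
  have hn : ‖v‖ = r := by simp [v, abs_of_pos hr0]
  have h2 := h 2 ![0, v] ![1, -1]
  simp only [Fin.sum_univ_two, gaussK, l1expK] at h2
  simp only [Matrix.cons_val_zero, Matrix.cons_val_one, sub_self, zero_sub, sub_zero, norm_neg, norm_zero, hn,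
    map_one, map_neg, PiLp.zero_apply, abs_neg, hs, abs_zero, Finset.sum_const_zero] at h2
  have h3 : 0 ≤ 2 * (lam * (1 - Real.exp (-r ^ 2 / γ)) - (1 - Real.exp (-r / σ))) := by
    rw [← Complex.zero_le_real]
    convert h2 using 1
    push_cast
    simp
    ring
  have h4 : 1 - Real.exp (-r ^ 2 / γ) ≤ r ^ 2 / γ := by
    have := Real.add_one_le_exp (-r ^ 2 / γ)
    rw [neg_div] at this ⊢; linarith
  have h5 : (r / σ) / (1 + r / σ) ≤ 1 - Real.exp (-r / σ) := by
    have h6 := Real.add_one_le_exp (r / σ)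
    have h7 : Real.exp (-r / σ) ≤ (1 + r / σ)⁻¹ := by
      rw [neg_div, Real.exp_neg]
      exact inv_anti₀ (by positivity) (by linarith)
    have : (r / σ) / (1 + r / σ) = 1 - (1 + r / σ)⁻¹ := by
      field_simp; ring
    linarith
  have h8 : (r / σ) / (1 + r / σ) ≤ lam * (r ^ 2 / γ) := by
    have := mul_le_mul_of_nonneg_left h4 hl
    linarith
  have h9 : γ ≤ lam * r * (σ + r) := by
    have e : (r / σ) / (1 + r / σ) = r / (σ + r) := by field_simp
    rw [e, div_le_iff₀ (by positivity)] at h8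
    have e2 : lam * (r ^ 2 / γ) * (σ + r) = r * (lam * r * (σ + r) / γ) := by field_simp
    rw [e2] at h8
    have := le_of_mul_le_mul_left (by linarith : r * 1 ≤ r * (lam * r * (σ + r) / γ)) hr0
    rwa [le_div_iff₀ hγ, one_mul] at this
  have hrs : r ≤ σ := by
    rw [hr, div_le_iff₀ (by positivity)]
    have : 0 ≤ σ * (2 * lam * σ ^ 2) := by positivity
    nlinarith
  have h10 : γ ≤ 2 * lam * r * σ := by
    have : lam * r * (σ + r) ≤ lam * r * (σ + σ) := by gcongr
    linarith
  have h11 : 0 < r * γ := by positivity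
  nlinarith

/-- (a) No `λ ≥ 0` makes `λG_γ − E_σ` positive semidefinite; (b) with
`λ = (max(1, 4σ²/γ)·√(γπ)/(2σ))^d`, `λE_σ − G_γ` is a positive semidefinite kernel. -/
theorem gaussian_l1exp_inclusion (d : ℕ) (hd : 0 < d) (γ σ : ℝ) (hγ : 0 < γ) (hσ : 0 < σ) :
    (¬ ∃ lam : ℝ, 0 ≤ lam ∧
        IsPSDKernel (fun x y : EuclideanSpace ℝ (Fin d) =>
          (lam : ℂ) * gaussK d γ x y - l1expK d σ x y)) ∧
    IsPSDKernel (fun x y : EuclideanSpace ℝ (Fin d) =>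
      (((max 1 (4 * σ ^ 2 / γ) * (Real.sqrt (γ * Real.pi) / (2 * σ))) ^ d : ℝ) : ℂ) *
          l1expK d σ x y - gaussK d γ x y) := by
  refine ⟨fun ⟨lam, hl, h⟩ => part_a d hd γ σ hγ hσ lam hl h, ?_⟩
  intro n x c
  set L := max 1 (4 * σ ^ 2 / γ) * (Real.sqrt (γ * Real.pi) / (2 * σ)) with hL
  have hP := (prod_psd n
    (fun (i : Fin d) j k => ((L * Real.exp (-|x j i - x k i| / σ) : ℝ) : ℂ))
    (fun (i : Fin d) j k => ((Real.exp (-(x j i - x k i) ^ 2 / γ) : ℝ) : ℂ))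
    (fun i => gauss1_psd γ hγ n fun j => x j i)
    (fun i => by
      have := diff1_psd γ σ hγ hσ n fun j => x j i
      rw [← hL] at this
      simpa only [Complex.ofReal_sub] using this) Finset.univ).2
  have h := (Matrix.posSemidef_iff_dotProduct_mulVec.1 hP).2 (star c)
  rw [star_star] at h
  convert h using 1
  simp only [dotProduct, Matrix.mulVec, Finset.mul_sum, Matrix.of_apply]
  refine Finset.sum_congr rfl fun j _ => Finset.sum_congr rfl fun k _ => ?_
  have e1 : l1expK d σ (x j) (x k) = ∏ i, ((Real.exp (-|x j i - x k i| / σ) : ℝ) : ℂ) := by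
    rw [l1expK, ← Complex.ofReal_prod, ← Real.exp_sum, ← Finset.sum_div, Finset.sum_neg_distrib]
  have e2 : gaussK d γ (x j) (x k) = ∏ i, ((Real.exp (-(x j i - x k i) ^ 2 / γ) : ℝ) : ℂ) := by
    rw [gaussK, ← Complex.ofReal_prod, ← Real.exp_sum, ← Finset.sum_div, Finset.sum_neg_distrib,
      EuclideanSpace.norm_sq_eq]
    simp
  rw [e1, e2]
  simp only [Complex.ofReal_mul L, Finset.prod_mul_distrib, Finset.prod_const, Finset.card_univ, Fintype.card_fin,
    Complex.ofReal_pow, Pi.star_apply, Complex.star_def]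
  ring
end
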